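/- Let (α, β) be an admissible pair, and for 0 < λ < λ*(α,β) let u_λ be the minimal classical solution of (P)_{λ,α,β}. Then: (i) for every 0 < λ < λ*(α,β), 2 ∫_B (u_λ − Φ)²/(1−u_λ)³ ≤ ∫_B (u_λ − Φ)/(1−u_λ)²; (ii) there exists a constant C > 0, independent of λ, such that ∫_B (Δu_λ)² + ∫_B (1−u_λ)^{−3} ≤ C for every λ ∈ (0, λ*(α,β)). -/

import Mathlib

open MeasureTheory Metric Set Filter

/-- The Laplacian of `u : ℝ^N → ℝ`, as the sum of pure second partial derivatives. -/
noncomputable def lap {N : ℕ} (u : EuclideanSpace ℝ (Fin N) → ℝ) (x : EuclideanSpace ℝ (Fin N)) : ℝ :=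
  ∑ i : Fin N, fderiv ℝ (fun y => fderiv ℝ u y (EuclideanSpace.single i 1)) x
    (EuclideanSpace.single i 1)

/-- The biharmonic operator `Δ²`. -/
noncomputable def biharm {N : ℕ} (u : EuclideanSpace ℝ (Fin N) → ℝ)
    (x : EuclideanSpace ℝ (Fin N)) : ℝ :=
  lap (lap u) x

/-- `Φ(x) = (α - β/2) + (β/2)|x|²`, the biharmonic extension of the boundary data `(α, β)`. -/
noncomputable def Phi {N : ℕ} (α β : ℝ) (x : EuclideanSpace ℝ (Fin N)) : ℝ :=
  (α - β / 2) + (β / 2) * ‖x‖ ^ 2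

/-- A pair `(α, β)` is admissible if `β ≤ 0` and `α - β/2 < 1`. -/
def Admissible (α β : ℝ) : Prop := β ≤ 0 ∧ α - β / 2 < 1

/-- Test functions: `φ ∈ C⁴(B̄)` with `φ = 0` and `∇φ = 0` on `∂B`. -/
def IsTest (N : ℕ) (φ : EuclideanSpace ℝ (Fin N) → ℝ) : Prop :=
  ContDiffOn ℝ 4 φ (closedBall (0 : EuclideanSpace ℝ (Fin N)) 1) ∧
    (∀ x : EuclideanSpace ℝ (Fin N), ‖x‖ = 1 → φ x = 0) ∧
    (∀ x : EuclideanSpace ℝ (Fin N), ‖x‖ = 1 →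
      fderivWithin ℝ φ (closedBall (0 : EuclideanSpace ℝ (Fin N)) 1) x = 0)

/-- A weak solution of `(P)_{λ,α,β}` on the unit ball. -/
def IsWeakSolutionAB (N : ℕ) (lam α β : ℝ) (u : EuclideanSpace ℝ (Fin N) → ℝ) : Prop :=
  (∀ᵐ x ∂(volume.restrict (ball (0 : EuclideanSpace ℝ (Fin N)) 1)), α ≤ u x ∧ u x ≤ 1) ∧
    IntegrableOn (fun x => ((1 - u x) ^ 2)⁻¹) (ball (0 : EuclideanSpace ℝ (Fin N)) 1) ∧
    ∀ φ : EuclideanSpace ℝ (Fin N) → ℝ, IsTest N φ →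
      ∫ x in ball (0 : EuclideanSpace ℝ (Fin N)) 1, (u x - Phi α β x) * biharm φ x =
        lam * ∫ x in ball (0 : EuclideanSpace ℝ (Fin N)) 1, φ x / (1 - u x) ^ 2

/-- A weak super-solution of `(P)_{λ,α,β}` on the unit ball. -/
def IsWeakSuperSolutionAB (N : ℕ) (lam α β : ℝ) (u : EuclideanSpace ℝ (Fin N) → ℝ) : Prop :=
  (∀ᵐ x ∂(volume.restrict (ball (0 : EuclideanSpace ℝ (Fin N)) 1)), α ≤ u x ∧ u x ≤ 1) ∧
    IntegrableOn (fun x => ((1 - u x) ^ 2)⁻¹) (ball (0 : EuclideanSpace ℝ (Fin N)) 1) ∧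
    ∀ φ : EuclideanSpace ℝ (Fin N) → ℝ, IsTest N φ →
      (∀ x ∈ closedBall (0 : EuclideanSpace ℝ (Fin N)) 1, 0 ≤ φ x) →
      ∫ x in ball (0 : EuclideanSpace ℝ (Fin N)) 1, (u x - Phi α β x) * biharm φ x ≥
        lam * ∫ x in ball (0 : EuclideanSpace ℝ (Fin N)) 1, φ x / (1 - u x) ^ 2

/-- A classical solution of `(P)_{λ,α,β}` on the unit ball: `u ∈ C⁴(B̄)`, `α < u < 1` in `B`,
`Δ²u = λ(1-u)⁻²` in `B`, and `u = α`, `∂_ν u = β` on `∂B`. -/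
structure IsClassicalSolutionAB (N : ℕ) (lam α β : ℝ)
    (u : EuclideanSpace ℝ (Fin N) → ℝ) : Prop where
  contDiffOn : ContDiffOn ℝ 4 u (closedBall (0 : EuclideanSpace ℝ (Fin N)) 1)
  gt_alpha : ∀ x ∈ ball (0 : EuclideanSpace ℝ (Fin N)) 1, α < u x
  lt_one : ∀ x ∈ ball (0 : EuclideanSpace ℝ (Fin N)) 1, u x < 1
  eqn : ∀ x ∈ ball (0 : EuclideanSpace ℝ (Fin N)) 1, biharm u x = lam / (1 - u x) ^ 2
  bdry : ∀ x : EuclideanSpace ℝ (Fin N), ‖x‖ = 1 → u x = α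
  bdry_deriv : ∀ x : EuclideanSpace ℝ (Fin N), ‖x‖ = 1 →
    fderivWithin ℝ u (closedBall (0 : EuclideanSpace ℝ (Fin N)) 1) x x = β

/-- The set of voltages `λ > 0` for which `(P)_{λ,α,β}` admits a classical solution;
the pull-in voltage `λ*(α,β)` is its supremum. -/
def solSetAB (N : ℕ) (α β : ℝ) : Set ℝ :=
  {lam | 0 < lam ∧ ∃ u, IsClassicalSolutionAB N lam α β u}


open scoped Topology

/-- weighted mean -/
noncomputable def rA (m : ℕ) (h : ℝ → ℝ) (r : ℝ) : ℝ := ∫ t in (0:ℝ)..1, t ^ m * h (r * t)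
noncomputable def rD (m : ℕ) (h : ℝ → ℝ) (r : ℝ) : ℝ := r * rA m h r
noncomputable def rL (m : ℕ) (h : ℝ → ℝ) (r : ℝ) : ℝ := ∫ s in (0:ℝ)..r, rD m h s
noncomputable def rI (m : ℕ) (h : ℝ → ℝ) (r : ℝ) : ℝ := ∫ s in (0:ℝ)..r, s ^ m * h s
noncomputable def rZ (m : ℕ) (g : ℝ → ℝ) (r : ℝ) : ℝ := rL m g r - (m + 1) * rA m (rL m g) 1
noncomputable def rG (m : ℕ) (g : ℝ → ℝ) (r : ℝ) : ℝ := rL m (rZ m g) r - rL m (rZ m g) 1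

lemma rA_cont (m : ℕ) {h : ℝ → ℝ} (hh : Continuous h) : Continuous (rA m h) := by
  unfold rA
  apply intervalIntegral.continuous_parametric_intervalIntegral_of_continuous'
  simp only [Function.uncurry_def]
  fun_prop

lemma rD_cont (m : ℕ) {h : ℝ → ℝ} (hh : Continuous h) : Continuous (rD m h) :=
  continuous_id.mul (rA_cont m hh)

lemma rL_deriv (m : ℕ) {h : ℝ → ℝ} (hh : Continuous h) (r : ℝ) :
    HasDerivAt (rL m h) (rD m h r) r :=
  intervalIntegral.integral_hasDerivAt_right ((rD_cont m hh).intervalIntegrable _ _)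
    ((rD_cont m hh).stronglyMeasurableAtFilter _ _) (rD_cont m hh).continuousAt

lemma rL_cont (m : ℕ) {h : ℝ → ℝ} (hh : Continuous h) : Continuous (rL m h) :=
  continuous_iff_continuousAt.2 fun r => (rL_deriv m hh r).continuousAt

lemma rZ_cont (m : ℕ) {h : ℝ → ℝ} (hh : Continuous h) : Continuous (rZ m h) :=
  (rL_cont m hh).sub continuous_const

lemma rG_cont (m : ℕ) {h : ℝ → ℝ} (hh : Continuous h) : Continuous (rG m h) :=
  (rL_cont m (rZ_cont m hh)).sub continuous_const

lemma rI_deriv (m : ℕ) {h : ℝ → ℝ} (hh : Continuous h) (r : ℝ) :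
    HasDerivAt (rI m h) (r ^ m * h r) r := by
  have hc : Continuous fun s : ℝ => s ^ m * h s := by fun_prop
  exact intervalIntegral.integral_hasDerivAt_right (hc.intervalIntegrable _ _)
    (hc.stronglyMeasurableAtFilter _ _) hc.continuousAt

lemma pow_mul_rD (m : ℕ) (h : ℝ → ℝ) (r : ℝ) : r ^ m * rD m h r = rI m h r := by
  unfold rD rA rI
  have := intervalIntegral.mul_integral_comp_mul_left (a := 0) (b := 1) (f := fun s => s ^ m * h s) r
  simp only [mul_zero, mul_one] at this
  rw [← this, mul_left_comm, ← intervalIntegral.integral_const_mul]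
  congr 1
  apply intervalIntegral.integral_congr
  intro t _
  simp only [mul_pow]; ring

lemma rD_zero (m : ℕ) (h : ℝ → ℝ) : rD m h 0 = 0 := by simp [rD]

lemma rA_const (m : ℕ) (c r : ℝ) : rA m (fun _ => c) r = c / (m + 1) := by
  simp [rA, intervalIntegral.integral_mul_const, integral_pow]; ring

lemma rA_add (m : ℕ) {g h : ℝ → ℝ} (hg : Continuous g) (hh : Continuous h) (r : ℝ) :
    rA m (fun s => g s + h s) r = rA m g r + rA m h r := by
  unfold rA
  rw [← intervalIntegral.integral_add]
  · simp only [mul_add]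
  · exact Continuous.intervalIntegrable (by fun_prop) _ _
  · exact Continuous.intervalIntegrable (by fun_prop) _ _

lemma rA_smul (m : ℕ) (c : ℝ) (h : ℝ → ℝ) (r : ℝ) :
    rA m (fun s => c * h s) r = c * rA m h r := by
  unfold rA
  rw [← intervalIntegral.integral_const_mul]
  congr 1; ext t; ring

lemma rL_add (m : ℕ) {g h : ℝ → ℝ} (hg : Continuous g) (hh : Continuous h) (r : ℝ) :
    rL m (fun s => g s + h s) r = rL m g r + rL m h r := by
  unfold rL
  rw [← intervalIntegral.integral_add ((rD_cont m hg).intervalIntegrable _ _)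
    ((rD_cont m hh).intervalIntegrable _ _)]
  congr 1; ext t; simp only [rD, rA_add m hg hh]; ring

lemma rL_smul (m : ℕ) (c : ℝ) (h : ℝ → ℝ) (r : ℝ) :
    rL m (fun s => c * h s) r = c * rL m h r := by
  unfold rL
  rw [← intervalIntegral.integral_const_mul]
  congr 1; ext t; simp only [rD, rA_smul]; ring

lemma rL_const (m : ℕ) (c r : ℝ) : rL m (fun _ => c) r = c / (m + 1) * r ^ 2 / 2 := by
  simp [rL, rD, rA_const, intervalIntegral.integral_mul_const]; ring

lemma rZ_add (m : ℕ) {g h : ℝ → ℝ} (hg : Continuous g) (hh : Continuous h) (r : ℝ) :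
    rZ m (fun s => g s + h s) r = rZ m g r + rZ m h r := by
  unfold rZ
  have : rL m (fun s => g s + h s) = fun s => rL m g s + rL m h s := by
    ext s; exact rL_add m hg hh s
  rw [this, rA_add m (rL_cont m hg) (rL_cont m hh)]; ring

lemma rZ_smul (m : ℕ) (c : ℝ) (h : ℝ → ℝ) (r : ℝ) :
    rZ m (fun s => c * h s) r = c * rZ m h r := by
  unfold rZ
  have : rL m (fun s => c * h s) = fun s => c * rL m h s := by
    ext s; exact rL_smul m c h s
  rw [this, rA_smul]; ring

lemma rG_add (m : ℕ) {g h : ℝ → ℝ} (hg : Continuous g) (hh : Continuous h) (r : ℝ) :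
    rG m (fun s => g s + h s) r = rG m g r + rG m h r := by
  unfold rG
  have : rZ m (fun s => g s + h s) = fun s => rZ m g s + rZ m h s := by
    ext s; exact rZ_add m hg hh s
  rw [this, rL_add m (rZ_cont m hg) (rZ_cont m hh), rL_add m (rZ_cont m hg) (rZ_cont m hh)]; ring

lemma rG_smul (m : ℕ) (c : ℝ) (h : ℝ → ℝ) (r : ℝ) :
    rG m (fun s => c * h s) r = c * rG m h r := by
  unfold rG
  have : rZ m (fun s => c * h s) = fun s => c * rZ m h s := by
    ext s; exact rZ_smul m c h s
  rw [this, rL_smul, rL_smul]; ring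

lemma rG_sub (m : ℕ) {g h : ℝ → ℝ} (hg : Continuous g) (hh : Continuous h) (r : ℝ) :
    rG m (fun s => g s - h s) r = rG m g r - rG m h r := by
  have h1 := rG_add m hg (h := fun s => (-1) * h s) (by fun_prop) r
  rw [rG_smul] at h1
  have h2 : (fun s => g s - h s) = fun s => g s + (-1) * h s := by ext s; ring
  rw [h2, h1]; ring

lemma rA_congr (m : ℕ) {g h : ℝ → ℝ} (H : ∀ r ∈ Icc (0:ℝ) 1, g r = h r) :
    ∀ r ∈ Icc (0:ℝ) 1, rA m g r = rA m h r := by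
  intro r hr
  apply intervalIntegral.integral_congr
  intro t ht
  rw [uIcc_of_le zero_le_one] at ht
  simp only
  rw [H _ ⟨mul_nonneg hr.1 ht.1, mul_le_one₀ hr.2 ht.1 ht.2⟩]

lemma rL_congr (m : ℕ) {g h : ℝ → ℝ} (H : ∀ r ∈ Icc (0:ℝ) 1, g r = h r) :
    ∀ r ∈ Icc (0:ℝ) 1, rL m g r = rL m h r := by
  intro r hr
  apply intervalIntegral.integral_congr
  intro t ht
  rw [uIcc_of_le hr.1] at ht
  simp only [rD]
  rw [rA_congr m H t ⟨ht.1, ht.2.trans hr.2⟩]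

lemma rZ_congr (m : ℕ) {g h : ℝ → ℝ} (H : ∀ r ∈ Icc (0:ℝ) 1, g r = h r) :
    ∀ r ∈ Icc (0:ℝ) 1, rZ m g r = rZ m h r := by
  intro r hr
  unfold rZ
  rw [rL_congr m H r hr, rA_congr m (rL_congr m H) 1 (by simp)]

lemma rG_congr (m : ℕ) {g h : ℝ → ℝ} (H : ∀ r ∈ Icc (0:ℝ) 1, g r = h r) :
    ∀ r ∈ Icc (0:ℝ) 1, rG m g r = rG m h r := by
  intro r hr
  unfold rG
  rw [rL_congr m (rZ_congr m H) r hr, rL_congr m (rZ_congr m H) 1 (by simp)]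

lemma rG_one (m : ℕ) (g : ℝ → ℝ) : rG m g 1 = 0 := by simp [rG]

lemma rD_rZ_one (m : ℕ) {g : ℝ → ℝ} (hg : Continuous g) : rD m (rZ m g) 1 = 0 := by
  have : rZ m g = fun s => rL m g s + (-((m + 1) * rA m (rL m g) 1)) := by
    ext s; simp [rZ]; ring
  rw [rD, this, rA_add m (rL_cont m hg) continuous_const, rA_const]
  have : (m:ℝ) + 1 ≠ 0 := by positivity
  field_simp; ring

lemma rI_rZ_one (m : ℕ) {g : ℝ → ℝ} (hg : Continuous g) : rI m (rZ m g) 1 = 0 := by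
  rw [← pow_mul_rD, rD_rZ_one m hg, mul_zero]

lemma rI_zero (m : ℕ) (g : ℝ → ℝ) : rI m g 0 = 0 := by simp [rI]

lemma rG_deriv (m : ℕ) {g : ℝ → ℝ} (hg : Continuous g) (r : ℝ) :
    HasDerivAt (rG m g) (rD m (rZ m g) r) r :=
  (rL_deriv m (rZ_cont m hg) r).sub_const _

lemma rI_cont (m : ℕ) {h : ℝ → ℝ} (hh : Continuous h) : Continuous (rI m h) :=
  continuous_iff_continuousAt.2 fun r => (rI_deriv m hh r).continuousAt

/-- symmetry -/
lemma rG_symm (m : ℕ) {g h : ℝ → ℝ} (hg : Continuous g) (hh : Continuous h) :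
    ∫ r in (0:ℝ)..1, r ^ m * (g r * rG m h r) = ∫ r in (0:ℝ)..1, r ^ m * (rZ m g r * rZ m h r) := by
  have h1 := intervalIntegral.integral_mul_deriv_eq_deriv_mul (a := 0) (b := 1)
    (u := rG m h) (v := rI m g) (fun x _ => rG_deriv m hh x) (fun x _ => rI_deriv m hg x)
    ((rD_cont m (rZ_cont m hh)).intervalIntegrable _ _)
    (Continuous.intervalIntegrable (by fun_prop) _ _)
  have h2 := intervalIntegral.integral_mul_deriv_eq_deriv_mul (a := 0) (b := 1)
    (u := rZ m g) (v := rI m (rZ m h)) (u' := rD m g)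
    (fun x _ => (rL_deriv m hg x).sub_const _) (fun x _ => rI_deriv m (rZ_cont m hh) x)
    ((rD_cont m hg).intervalIntegrable _ _)
    (Continuous.intervalIntegrable (by have := rZ_cont m hh; fun_prop) _ _)
  rw [rG_one, rI_zero] at h1
  rw [rI_rZ_one m hh, rI_zero] at h2
  have e1 : ∫ r in (0:ℝ)..1, r ^ m * (g r * rG m h r) = ∫ r in (0:ℝ)..1, rG m h r * (r ^ m * g r) := by
    congr 1; ext r; ring
  have e2 : ∫ r in (0:ℝ)..1, r ^ m * (rZ m g r * rZ m h r)
      = ∫ r in (0:ℝ)..1, rZ m g r * (r ^ m * rZ m h r) := by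
    congr 1; ext r; ring
  have e3 : ∫ r in (0:ℝ)..1, rD m (rZ m h) r * rI m g r = ∫ r in (0:ℝ)..1, rD m g r * rI m (rZ m h) r := by
    congr 1; ext r; rw [← pow_mul_rD, ← pow_mul_rD]; ring
  rw [e1, e2, h1, h2, e3]; ring

lemma rA_nonneg (m : ℕ) {g : ℝ → ℝ} (hg : ∀ r ∈ Icc (0:ℝ) 1, 0 ≤ g r) :
    ∀ r ∈ Icc (0:ℝ) 1, 0 ≤ rA m g r := by
  intro r hr
  apply intervalIntegral.integral_nonneg zero_le_one
  intro t ht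
  exact mul_nonneg (pow_nonneg ht.1 _) (hg _ ⟨mul_nonneg hr.1 ht.1, mul_le_one₀ hr.2 ht.1 ht.2⟩)

lemma rZ_mono (m : ℕ) {g : ℝ → ℝ} (hc : Continuous g) (hg : ∀ r ∈ Icc (0:ℝ) 1, 0 ≤ g r) :
    MonotoneOn (rZ m g) (Icc 0 1) := by
  apply monotoneOn_of_hasDerivWithinAt_nonneg (f' := rD m g) (convex_Icc 0 1)
    (rZ_cont m hc).continuousOn
  · intro x _
    exact ((rL_deriv m hc x).sub_const _).hasDerivWithinAt
  · intro x hx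
    have hx' := interior_subset hx
    exact mul_nonneg hx'.1 (rA_nonneg m hg x hx')

lemma rD_rZ_nonpos (m : ℕ) {g : ℝ → ℝ} (hc : Continuous g) (hg : ∀ r ∈ Icc (0:ℝ) 1, 0 ≤ g r) :
    ∀ r ∈ Icc (0:ℝ) 1, rD m (rZ m g) r ≤ 0 := by
  intro r hr
  rcases hr.1.eq_or_lt with h0 | h0
  · rw [← h0, rD_zero]
  have hz := rZ_cont m hc
  have hI : rI m (rZ m g) r ≤ 0 := by
    rcases le_total (rZ m g r) 0 with h | h
    · have : 0 ≤ ∫ s in (0:ℝ)..r, -(s ^ m * rZ m g s) := by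
        apply intervalIntegral.integral_nonneg hr.1
        intro s hs
        have := rZ_mono m hc hg ⟨hs.1, hs.2.trans hr.2⟩ hr hs.2
        have := mul_nonneg (pow_nonneg hs.1 m) (neg_nonneg.2 (this.trans h))
        linarith
      rw [intervalIntegral.integral_neg] at this
      unfold rI; linarith
    · have : 0 ≤ ∫ s in r..1, (s ^ m * rZ m g s) := by
        apply intervalIntegral.integral_nonneg hr.2
        intro s hs
        have := rZ_mono m hc hg hr ⟨hr.1.trans hs.1, hs.2⟩ hs.1
        exact mul_nonneg (pow_nonneg (hr.1.trans hs.1) m) (h.trans this)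
      have h1 := rI_rZ_one m hc
      have hcc : Continuous fun s => s ^ m * rZ m g s := by fun_prop
      have h2 := intervalIntegral.integral_add_adjacent_intervals (hcc.intervalIntegrable (μ := volume) 0 r)
        (hcc.intervalIntegrable (μ := volume) r 1)
      unfold rI at h1 ⊢; linarith
  rw [← pow_mul_rD] at hI
  have := pow_pos h0 m
  by_contra hcon
  push Not at hcon
  have := mul_pos this hcon
  linarith

lemma rG_nonneg (m : ℕ) {g : ℝ → ℝ} (hc : Continuous g) (hg : ∀ r ∈ Icc (0:ℝ) 1, 0 ≤ g r) :
    ∀ r ∈ Icc (0:ℝ) 1, 0 ≤ rG m g r := by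
  intro r hr
  have : AntitoneOn (rG m g) (Icc 0 1) := by
    apply antitoneOn_of_hasDerivWithinAt_nonpos (f' := rD m (rZ m g)) (convex_Icc 0 1)
      (rG_cont m hc).continuousOn
    · intro x _
      exact (rG_deriv m hc x).hasDerivWithinAt
    · intro x hx
      exact rD_rZ_nonpos m hc hg x (interior_subset hx)
  have := this hr (by simp : (1:ℝ) ∈ Icc (0:ℝ) 1) hr.2
  rwa [rG_one] at this

lemma rG_mono (m : ℕ) {g h : ℝ → ℝ} (hg : Continuous g) (hh : Continuous h)
    (H : ∀ r ∈ Icc (0:ℝ) 1, g r ≤ h r) : ∀ r ∈ Icc (0:ℝ) 1, rG m g r ≤ rG m h r := by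
  intro r hr
  have := rG_nonneg m (hh.sub hg) (fun r hr => sub_nonneg.2 (H r hr)) r hr
  have h2 := rG_sub m hh hg r
  simp only [Pi.sub_def] at this
  linarith

lemma rA_bound (m : ℕ) {g : ℝ → ℝ} {M : ℝ} (hg : ∀ r ∈ Icc (0:ℝ) 1, |g r| ≤ M) :
    ∀ r ∈ Icc (0:ℝ) 1, |rA m g r| ≤ M := by
  intro r hr
  have := intervalIntegral.norm_integral_le_of_norm_le_const (a := 0) (b := 1) (C := M)
    (f := fun t => t ^ m * g (r * t)) (by
      intro t ht
      rw [uIoc_of_le zero_le_one] at ht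
      rw [norm_mul, Real.norm_eq_abs, Real.norm_eq_abs, abs_of_nonneg (pow_nonneg ht.1.le _)]
      have h1 := hg _ ⟨mul_nonneg hr.1 ht.1.le, mul_le_one₀ hr.2 ht.1.le ht.2⟩
      have h2 : t ^ m ≤ 1 := pow_le_one₀ ht.1.le ht.2
      have h3 := pow_nonneg ht.1.le m
      nlinarith [abs_nonneg (g (r * t))])
  simpa [rA] using this

lemma rD_bound (m : ℕ) {g : ℝ → ℝ} {M : ℝ} (hg : ∀ r ∈ Icc (0:ℝ) 1, |g r| ≤ M) :
    ∀ r ∈ Icc (0:ℝ) 1, |rD m g r| ≤ M := by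
  intro r hr
  rw [rD, abs_mul, abs_of_nonneg hr.1]
  have := rA_bound m hg r hr
  nlinarith [abs_nonneg (rA m g r), hr.1, hr.2]

lemma rL_bound (m : ℕ) {g : ℝ → ℝ} {M : ℝ} (hg : ∀ r ∈ Icc (0:ℝ) 1, |g r| ≤ M) :
    ∀ r ∈ Icc (0:ℝ) 1, |rL m g r| ≤ M := by
  intro r hr
  have := intervalIntegral.norm_integral_le_of_norm_le_const (a := 0) (b := r) (C := M)
    (f := rD m g) (by
      intro t ht
      rw [uIoc_of_le hr.1] at ht
      exact rD_bound m hg t ⟨ht.1.le, ht.2.trans hr.2⟩)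
  rw [sub_zero, abs_of_nonneg hr.1, Real.norm_eq_abs] at this
  have hM : 0 ≤ M := (abs_nonneg _).trans (hg 0 (by simp))
  unfold rL
  nlinarith [hr.1, hr.2]

lemma rZ_bound (m : ℕ) {g : ℝ → ℝ} {M : ℝ} (hg : ∀ r ∈ Icc (0:ℝ) 1, |g r| ≤ M) :
    ∀ r ∈ Icc (0:ℝ) 1, |rZ m g r| ≤ (m + 2) * M := by
  intro r hr
  have h1 := rL_bound m hg r hr
  have h2 := rA_bound m (rL_bound m hg) 1 (by simp)
  unfold rZ
  have h3 := abs_sub (rL m g r) ((m + 1) * rA m (rL m g) 1)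
  rw [abs_mul, abs_of_nonneg (by positivity : (0:ℝ) ≤ m + 1)] at h3
  have : (0:ℝ) ≤ m := by positivity
  nlinarith

lemma rG_lip (m : ℕ) {g : ℝ → ℝ} (hc : Continuous g) {M : ℝ} (hg : ∀ r ∈ Icc (0:ℝ) 1, |g r| ≤ M) :
    ∀ r ∈ Icc (0:ℝ) 1, ∀ s ∈ Icc (0:ℝ) 1, |rG m g r - rG m g s| ≤ (m + 2) * M * |r - s| := by
  intro r hr s hs
  exact (convex_Icc (0:ℝ) 1).norm_image_sub_le_of_norm_hasDerivWithin_le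
    (f' := rD m (rZ m g)) (fun x _ => (rG_deriv m hc x).hasDerivWithinAt)
    (fun x hx => rD_bound m (rZ_bound m hg) x hx) hs hr

lemma logconv_bdd {o : ℕ → ℝ} {Bd : ℝ} (h0 : ∀ j, 0 ≤ o j) (hB : ∀ j, o j ≤ Bd)
    (hl : ∀ j, o (j + 1) ^ 2 ≤ o j * o (j + 2)) : o 1 ≤ o 0 := by
  by_contra hcon
  push Not at hcon
  have hpos : 0 < o 0 := by
    rcases (h0 0).eq_or_lt with h | h
    · have := hl 0
      rw [← h] at this hcon
      nlinarith
    · exact h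
  set q := o 1 / o 0 with hq
  have hq1 : 1 < q := (one_lt_div hpos).2 hcon
  have key : ∀ j, 0 < o j ∧ q * o j ≤ o (j + 1) := by
    intro j
    induction j with
    | zero => exact ⟨hpos, by rw [hq]; field_simp; simp⟩
    | succ j ih =>
      obtain ⟨p, ih⟩ := ih
      have p1 : 0 < o (j + 1) := lt_of_lt_of_le (by positivity) ih
      refine ⟨p1, ?_⟩
      have h2 := hl j
      have h3 : q * o j * o (j + 1) ≤ o j * o (j + 2) := by nlinarith
      have h4 : o j * (q * o (j + 1)) ≤ o j * o (j + 2) := by linarith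
      exact le_of_mul_le_mul_left h4 p
  have key2 : ∀ j, q ^ j * o 0 ≤ o j := by
    intro j
    induction j with
    | zero => simp
    | succ j ih =>
      have := (key j).2
      have : q * (q ^ j * o 0) ≤ q * o j := mul_le_mul_of_nonneg_left ih (by linarith)
      rw [pow_succ]; linarith
  obtain ⟨k, hk⟩ := pow_unbounded_of_one_lt (Bd / o 0) hq1
  rw [div_lt_iff₀ hpos] at hk
  linarith [key2 k, hB k]

/-- weighted Cauchy-Schwarz -/
lemma wcs {p f g : ℝ → ℝ} (hp : Continuous p) (hf : Continuous f) (hg : Continuous g)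
    (p0 : ∀ r ∈ Icc (0:ℝ) 1, 0 ≤ p r) :
    (∫ r in (0:ℝ)..1, p r * (f r * g r)) ^ 2 ≤
      (∫ r in (0:ℝ)..1, p r * (f r * f r)) * (∫ r in (0:ℝ)..1, p r * (g r * g r)) := by
  have h : ∀ t : ℝ, 0 ≤ (∫ r in (0:ℝ)..1, p r * (g r * g r)) * (t * t)
      + (2 * ∫ r in (0:ℝ)..1, p r * (f r * g r)) * t + ∫ r in (0:ℝ)..1, p r * (f r * f r) := by
    intro t
    have e : (∫ r in (0:ℝ)..1, p r * (g r * g r)) * (t * t)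
      + (2 * ∫ r in (0:ℝ)..1, p r * (f r * g r)) * t + ∫ r in (0:ℝ)..1, p r * (f r * f r)
      = ∫ r in (0:ℝ)..1, ((p r * (g r * g r)) * (t * t) + (p r * (f r * g r)) * (2 * t)
          + p r * (f r * f r)) := by
      rw [intervalIntegral.integral_add, intervalIntegral.integral_add,
        intervalIntegral.integral_mul_const, intervalIntegral.integral_mul_const]
      · ring
      all_goals exact Continuous.intervalIntegrable (by fun_prop) _ _
    rw [e]
    apply intervalIntegral.integral_nonneg zero_le_one
    intro r hr
    have := mul_nonneg (p0 r hr) (sq_nonneg (f r + t * g r))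
    linarith
  have := discrim_le_zero h
  rw [discrim] at this
  nlinarith

lemma stab (m : ℕ) {a g w q : ℝ → ℝ} {M : ℝ} (ha : Continuous a) (hg : Continuous g)
    (hw : Continuous w) (hq : Continuous q)
    (a0 : ∀ r ∈ Icc (0:ℝ) 1, 0 ≤ a r) (g0 : ∀ r ∈ Icc (0:ℝ) 1, 0 ≤ g r)
    (hwq : ∀ r ∈ Icc (0:ℝ) 1, w r = rG m q r) (haw : ∀ r ∈ Icc (0:ℝ) 1, a r * w r ≤ q r)
    (hM : 0 ≤ M) (hgq : ∀ r ∈ Icc (0:ℝ) 1, g r ≤ M * q r) :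
    ∫ r in (0:ℝ)..1, r ^ m * (a r * rG m g r ^ 2) ≤ ∫ r in (0:ℝ)..1, r ^ m * (g r * rG m g r) := by
  let ψ : ℕ → ℝ → ℝ := fun j => Nat.rec (rG m g) (fun _ p => rG m (fun r => a r * p r)) j
  have ψ0 : ψ 0 = rG m g := rfl
  have ψs : ∀ j, ψ (j + 1) = rG m (fun r => a r * ψ j r) := fun j => rfl
  have ψc : ∀ j, Continuous (ψ j) := by
    intro j
    induction j with
    | zero => exact rG_cont m hg
    | succ j ih => rw [ψs]; exact rG_cont m (ha.mul ih)
  have aψc : ∀ j, Continuous (fun r => a r * ψ j r) := fun j => ha.mul (ψc j)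
  have ψn : ∀ j, ∀ r ∈ Icc (0:ℝ) 1, 0 ≤ ψ j r := by
    intro j
    induction j with
    | zero => exact rG_nonneg m hg g0
    | succ j ih =>
      rw [ψs]; exact rG_nonneg m (ha.mul (ψc j)) (fun r hr => mul_nonneg (a0 r hr) (ih r hr))
  have ψb : ∀ j, ∀ r ∈ Icc (0:ℝ) 1, ψ j r ≤ M * w r := by
    intro j
    induction j with
    | zero =>
      intro r hr
      rw [hwq r hr, ← rG_smul]
      exact rG_mono m hg (by fun_prop) hgq r hr
    | succ j ih =>
      intro r hr
      rw [hwq r hr, ← rG_smul, ψs]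
      refine rG_mono m (aψc j) (by fun_prop) ?_ r hr
      intro s hs
      have h1 := mul_le_mul_of_nonneg_left (ih s hs) (a0 s hs)
      have h2 := mul_le_mul_of_nonneg_left (haw s hs) hM
      linarith
  have sym : ∀ {f h : ℝ → ℝ}, Continuous f → Continuous h →
      ∫ r in (0:ℝ)..1, r ^ m * (f r * rG m h r) = ∫ r in (0:ℝ)..1, r ^ m * (h r * rG m f r) := by
    intro f h hf hh
    rw [rG_symm m hf hh, rG_symm m hh hf]
    congr 1; ext r; ring
  have pc : Continuous fun r : ℝ => r ^ m * a r := by fun_prop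
  have p0 : ∀ r ∈ Icc (0:ℝ) 1, 0 ≤ r ^ m * a r := fun r hr => mul_nonneg (pow_nonneg hr.1 _) (a0 r hr)
  let o : ℕ → ℝ := fun j => ∫ r in (0:ℝ)..1, (r ^ m * a r) * (ψ j r * ψ j r)
  have o0 : ∀ j, 0 ≤ o j := fun j => intervalIntegral.integral_nonneg zero_le_one
    (fun r hr => mul_nonneg (p0 r hr) (mul_self_nonneg _))
  have oB : ∀ j, o j ≤ ∫ r in (0:ℝ)..1, (r ^ m * a r) * ((M * w r) * (M * w r)) := by
    intro j
    have := ψc j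
    apply intervalIntegral.integral_mono_on zero_le_one
      (Continuous.intervalIntegrable (by fun_prop) _ _)
      (Continuous.intervalIntegrable (by fun_prop) _ _)
    intro r hr
    exact mul_le_mul_of_nonneg_left (mul_self_le_mul_self (ψn j r hr) (ψb j r hr)) (p0 r hr)
  have ol : ∀ j, o (j + 1) ^ 2 ≤ o j * o (j + 2) := by
    intro j
    have h1 := wcs pc (ψc j) (ψc (j + 2)) p0
    have h2 : o (j + 1) = ∫ r in (0:ℝ)..1, (r ^ m * a r) * (ψ j r * ψ (j + 2) r) := by
      have h3 := sym (aψc (j + 1)) (aψc j)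
      rw [← ψs] at h3
      have e1 : o (j + 1) = ∫ r in (0:ℝ)..1, r ^ m * (a r * ψ (j + 1) r * ψ (j + 1) r) := by
        simp only [o]; congr 1; ext r; ring
      rw [e1, h3, show ψ (j + 2) = _ from ψs (j + 1)]
      congr 1; ext r; ring
    rw [h2]; exact h1
  have o10 := logconv_bdd o0 oB ol
  set n0 := ∫ r in (0:ℝ)..1, r ^ m * (g r * rG m g r) with hn0
  set n2 := ∫ r in (0:ℝ)..1, (r ^ m * a r) * (ψ 0 r * ψ 1 r) with hn2
  have c1 : n2 ^ 2 ≤ o 0 * o 1 := wcs pc (ψc 0) (ψc 1) p0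
  have eo : o 0 = ∫ r in (0:ℝ)..1, r ^ m * (a r * rG m g r ^ 2) := by
    simp only [o, ψ0]; congr 1; ext r; ring
  have hag := aψc 0
  have pm : Continuous fun r : ℝ => r ^ m := by fun_prop
  have n0nn : 0 ≤ n0 := by
    rw [hn0, rG_symm m hg hg]
    exact intervalIntegral.integral_nonneg zero_le_one
      (fun r hr => mul_nonneg (pow_nonneg hr.1 m) (mul_self_nonneg _))
  have c2 : o 0 ^ 2 ≤ n0 * n2 := by
    have h1 := wcs pm (rZ_cont m hg) (rZ_cont m hag) (fun r hr => pow_nonneg hr.1 m)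
    have e2 : n2 = ∫ r in (0:ℝ)..1, r ^ m * ((a r * ψ 0 r) * rG m (fun r => a r * ψ 0 r) r) := by
      rw [hn2, show ψ 1 = _ from ψs 0]; congr 1; ext r; ring
    have e1 : o 0 = ∫ r in (0:ℝ)..1, r ^ m * ((a r * ψ 0 r) * rG m g r) := by
      simp only [o, ψ0]; congr 1; ext r; ring
    have e1' : o 0 = ∫ r in (0:ℝ)..1, r ^ m * (rZ m g r * rZ m (fun r => a r * ψ 0 r) r) := by
      rw [e1, rG_symm m hag hg]
      congr 1; ext r; ring
    rw [e1', e2, hn0, rG_symm m hg hg, rG_symm m hag hag]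
    exact h1
  rw [← eo]
  rcases (o0 0).eq_or_lt with h | h
  · rw [← h]; exact n0nn
  have : n2 ≤ o 0 := by
    by_contra hc
    push Not at hc
    nlinarith
  nlinarith

noncomputable def cl (r : ℝ) : ℝ := max 0 (min 1 r)

lemma cl_mem (r : ℝ) : cl r ∈ Icc (0:ℝ) 1 := ⟨le_max_left _ _, max_le zero_le_one (min_le_left _ _)⟩

lemma cl_eq {r : ℝ} (hr : r ∈ Icc (0:ℝ) 1) : cl r = r := by
  rw [cl, min_eq_right hr.2, max_eq_right hr.1]

lemma cl_lip (r s : ℝ) : |cl r - cl s| ≤ |r - s| := by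
  unfold cl
  rw [max_comm, max_comm 0, min_comm, min_comm 1]
  exact (abs_max_sub_max_le_abs _ _ _).trans (abs_min_sub_min_le_max _ _ _ _ |>.trans (by simp))

lemma cl_cont : Continuous cl := by unfold cl; fun_prop

lemma F_mono {x y : ℝ} (hxy : x ≤ y) (hy : y < 1) : ((1 - x) ^ 2)⁻¹ ≤ ((1 - y) ^ 2)⁻¹ := by
  apply inv_anti₀
  · have : 0 < 1 - y := by linarith
    positivity
  · apply pow_le_pow_left₀ <;> linarith

lemma cont_of_lip {v : ℝ → ℝ} {K : ℝ} (h : ∀ r s, |v r - v s| ≤ K * |r - s|) : Continuous v := by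
  have : LipschitzWith (Real.toNNReal K) v := by
    apply LipschitzWith.of_dist_le_mul
    intro x y
    rw [Real.dist_eq, Real.dist_eq]
    exact (h x y).trans (mul_le_mul_of_nonneg_right (Real.le_coe_toNNReal K) (abs_nonneg _))
  exact this.continuous

lemma F_cont {v : ℝ → ℝ} (lam : ℝ) (hv : Continuous v) (h1 : ∀ r, v r < 1) :
    Continuous fun s => lam * ((1 - v s) ^ 2)⁻¹ := by
  refine continuous_const.mul (Continuous.inv₀ (by fun_prop) ?_)
  intro r
  have : 0 < 1 - v r := by linarith [h1 r]
  positivity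

lemma exists_fix (m : ℕ) {φ Ub : ℝ → ℝ} {lam mu Kφ : ℝ}
    (hφ : ∀ r ∈ Icc (0:ℝ) 1, ∀ s ∈ Icc (0:ℝ) 1, |φ r - φ s| ≤ Kφ * |r - s|)
    (hlam : 0 < lam) (hmu : lam ≤ mu)
    (hUc : Continuous Ub) (hU1 : ∀ r, Ub r < 1)
    (hU : ∀ r ∈ Icc (0:ℝ) 1, Ub r = φ r + rG m (fun s => mu * ((1 - Ub s) ^ 2)⁻¹) r) :
    ∃ v : ℝ → ℝ, Continuous v ∧ (∀ r, v r < 1) ∧ (∀ r ∈ Icc (0:ℝ) 1, v r ≤ Ub r) ∧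
      ∀ r ∈ Icc (0:ℝ) 1, v r = φ r + rG m (fun s => lam * ((1 - v s) ^ 2)⁻¹) r := by
  obtain ⟨c, hc, hmax⟩ := isCompact_Icc.exists_isMaxOn (⟨0, by simp⟩ : (Icc (0:ℝ) 1).Nonempty)
    hUc.continuousOn
  set κ := Ub c with hκ
  have hκ1 : κ < 1 := hU1 c
  have hUκ : ∀ r, Ub (cl r) ≤ κ := fun r => hmax (cl_mem r)
  set Q := lam * ((1 - κ) ^ 2)⁻¹ with hQ
  have hQ0 : 0 ≤ Q := by positivity
  have hKφ : 0 ≤ Kφ := by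
    have := (abs_nonneg _).trans (hφ 0 (by simp) 1 (by simp))
    simpa using this
  set K := Kφ + (m + 2) * Q with hK
  have hKK : Kφ ≤ K := by
    have : 0 ≤ (m + 2) * Q := by positivity
    linarith
  let T : (ℝ → ℝ) → ℝ → ℝ := fun v r => φ r + rG m (fun s => lam * ((1 - v s) ^ 2)⁻¹) r
  let Good : (ℝ → ℝ) → Prop := fun v =>
    (∀ r s, |v r - v s| ≤ K * |r - s|) ∧ (∀ r, v r ≤ Ub (cl r))
  have gl : ∀ v, Good v → ∀ r, v r < 1 := fun v hv r => (hv.2 r).trans_lt (hU1 _)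
  have gc : ∀ v, Good v → Continuous fun s => lam * ((1 - v s) ^ 2)⁻¹ :=
    fun v hv => F_cont lam (cont_of_lip hv.1) (gl v hv)
  have gT : ∀ v, Good v → ∀ r ∈ Icc (0:ℝ) 1, φ r ≤ T v r := by
    intro v hv r hr
    have := rG_nonneg m (gc v hv) (fun r _ => by positivity) r hr
    simp only [T]; linarith
  have step : ∀ v, Good v → Good (fun r => T v (cl r)) := by
    intro v hv
    constructor
    · intro r s
      have h1 := hφ _ (cl_mem r) _ (cl_mem s)
      have h2 := rG_lip m (gc v hv) (M := Q) (by
        intro x _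
        rw [abs_of_nonneg (by positivity)]
        exact mul_le_mul_of_nonneg_left (F_mono ((hv.2 x).trans (hUκ x)) hκ1) hlam.le)
        _ (cl_mem r) _ (cl_mem s)
      have h3 := cl_lip r s
      have h4 : K * |cl r - cl s| ≤ K * |r - s| := mul_le_mul_of_nonneg_left h3 (hKφ.trans hKK)
      refine le_trans ?_ h4
      have h5 := abs_add_le (φ (cl r) - φ (cl s))
        (rG m (fun s => lam * ((1 - v s) ^ 2)⁻¹) (cl r) - rG m (fun s => lam * ((1 - v s) ^ 2)⁻¹) (cl s))
      have e : T v (cl r) - T v (cl s) = φ (cl r) - φ (cl s) +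
        (rG m (fun s => lam * ((1 - v s) ^ 2)⁻¹) (cl r) - rG m (fun s => lam * ((1 - v s) ^ 2)⁻¹) (cl s)) := by
        simp only [T]; ring
      simp only [e]
      rw [hK, add_mul]
      linarith
    · intro r
      rw [hU _ (cl_mem r)]
      have := rG_mono m (gc v hv) (F_cont mu hUc hU1) (by
        intro x hx
        have := hv.2 x
        rw [cl_eq hx] at this
        have h2 := F_mono this (hU1 x)
        have h3 : 0 ≤ ((1 - v x) ^ 2)⁻¹ := by positivity
        calc lam * ((1 - v x) ^ 2)⁻¹ ≤ mu * ((1 - v x) ^ 2)⁻¹ := mul_le_mul_of_nonneg_right hmu h3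
          _ ≤ _ := mul_le_mul_of_nonneg_left h2 (hlam.le.trans hmu)) _ (cl_mem r)
      simp only [T]; linarith
  have mono : ∀ v w, Good v → Good w → (∀ r, v r ≤ w r) → ∀ r ∈ Icc (0:ℝ) 1, T v r ≤ T w r := by
    intro v w hv hw h r hr
    have := rG_mono m (gc v hv) (gc w hw) (fun x _ =>
      mul_le_mul_of_nonneg_left (F_mono (h x) (gl w hw x)) hlam.le) r hr
    simp only [T]; linarith
  let S : Set (ℝ → ℝ) := {v | Good v ∧ ∀ r, v r ≤ T v (cl r)}
  have base : (fun r => φ (cl r)) ∈ S := by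
    have g : Good (fun r => φ (cl r)) := by
      constructor
      · intro r s
        refine (hφ _ (cl_mem r) _ (cl_mem s)).trans ?_
        exact mul_le_mul hKK (cl_lip r s) (abs_nonneg _) (hKφ.trans hKK)
      · intro r
        simp only
        rw [hU _ (cl_mem r)]
        have := rG_nonneg m (F_cont mu hUc hU1) (fun r _ => by
          have := hlam.le.trans hmu
          positivity) _ (cl_mem r)
        linarith
    exact ⟨g, fun r => gT _ g _ (cl_mem r)⟩
  have : Nonempty S := ⟨⟨_, base⟩⟩
  let V : ℝ → ℝ := fun r => ⨆ v : S, (v : ℝ → ℝ) r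
  have bdd : ∀ r, BddAbove (range fun v : S => (v : ℝ → ℝ) r) := by
    intro r
    refine ⟨Ub (cl r), ?_⟩
    rintro _ ⟨v, rfl⟩
    exact v.2.1.2 r
  have leV : ∀ v ∈ S, ∀ r, v r ≤ V r := fun v hv r => le_ciSup (bdd r) (⟨v, hv⟩ : S)
  have gV : Good V := by
    constructor
    · have one : ∀ r s, V r ≤ V s + K * |r - s| := by
        intro r s
        apply ciSup_le
        intro v
        have h1 := v.2.1.1 r s
        have h2 := leV v v.2 s
        have := le_abs_self ((v : ℝ → ℝ) r - (v : ℝ → ℝ) s)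
        linarith
      intro r s
      rw [abs_le]
      have h1 := one r s
      have h2 := one s r
      rw [abs_sub_comm s r] at h2
      constructor <;> linarith
    · intro r
      exact ciSup_le fun v => v.2.1.2 r
  have VT : ∀ r, V r ≤ T V (cl r) := by
    intro r
    apply ciSup_le
    intro v
    exact (v.2.2 r).trans (mono _ _ v.2.1 gV (leV v v.2) _ (cl_mem r))
  have TS : (fun r => T V (cl r)) ∈ S := by
    refine ⟨step V gV, fun r => ?_⟩
    exact mono _ _ gV (step V gV) VT _ (cl_mem r)
  refine ⟨V, cont_of_lip gV.1, gl V gV, ?_, ?_⟩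
  · intro r hr
    have := gV.2 r
    rwa [cl_eq hr] at this
  · intro r hr
    apply le_antisymm
    · have := VT r
      rwa [cl_eq hr] at this
    · have := leV _ TS r
      rwa [cl_eq hr] at this

lemma param_hasFDerivAt {X Y : Type} [NormedAddCommGroup X] [NormedSpace ℝ X] [ProperSpace X]
    [NormedAddCommGroup Y] [NormedSpace ℝ Y] [CompleteSpace Y] (m : ℕ) {H : X → Y} (hH : ContDiff ℝ 1 H)
    (x₀ : X) : HasFDerivAt (fun x => ∫ t in (0:ℝ)..1, t ^ m • H (t • x))
      (∫ t in (0:ℝ)..1, t ^ (m + 1) • fderiv ℝ H (t • x₀)) x₀ := by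
  have hc := hH.continuous
  have hc' : Continuous (fderiv ℝ H) := hH.continuous_fderiv (by norm_num)
  obtain ⟨C, hC⟩ := (isCompact_closedBall (0 : X) (‖x₀‖ + 1)).exists_bound_of_continuousOn
    hc'.continuousOn
  refine (intervalIntegral.hasFDerivAt_integral_of_dominated_of_fderiv_le (𝕜 := ℝ) (μ := volume)
    (F := fun x t => t ^ m • H (t • x)) (F' := fun x t => t ^ (m + 1) • fderiv ℝ H (t • x))
    (bound := fun _ => C)
    (s := ball x₀ 1) (ball_mem_nhds _ one_pos) ?_ ?_ ?_ ?_ ?_ ?_)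
  · exact Eventually.of_forall fun x => (by fun_prop : Continuous fun t : ℝ => t ^ m • H (t • x)).aestronglyMeasurable
  · exact Continuous.intervalIntegrable (by fun_prop) _ _
  · exact (by fun_prop : Continuous fun t : ℝ => t ^ (m + 1) • fderiv ℝ H (t • x₀)).aestronglyMeasurable
  · refine Eventually.of_forall fun t ht x hx => ?_
    rw [uIoc_of_le zero_le_one] at ht
    have h1 : ‖x‖ ≤ ‖x₀‖ + 1 := by
      have := norm_sub_norm_le x x₀
      rw [mem_ball_iff_norm] at hx
      linarith
    have h2 : t • x ∈ closedBall (0 : X) (‖x₀‖ + 1) := by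
      rw [mem_closedBall_zero_iff, norm_smul, Real.norm_eq_abs, abs_of_pos ht.1]
      nlinarith [norm_nonneg x, ht.1, ht.2]
    rw [norm_smul, Real.norm_eq_abs, abs_of_nonneg (pow_nonneg ht.1.le _)]
    have h3 := hC _ h2
    have h4 : t ^ (m + 1) ≤ 1 := pow_le_one₀ ht.1.le ht.2
    nlinarith [norm_nonneg (fderiv ℝ H (t • x)), pow_nonneg ht.1.le (m + 1)]
  · exact intervalIntegrable_const
  · refine Eventually.of_forall fun t ht x hx => ?_
    have h1 : HasFDerivAt H (fderiv ℝ H (t • x)) (t • x) :=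
      (hH.differentiable (by norm_num) _).hasFDerivAt
    have h2 : HasFDerivAt (fun y : X => t • y) (t • ContinuousLinearMap.id ℝ X) x :=
      (hasFDerivAt_id x).const_smul t
    have h3 := (h1.comp x h2).const_smul (t ^ m)
    refine h3.congr_fderiv ?_
    ext y
    simp [pow_succ, mul_smul]

lemma param_contDiff {X : Type} [NormedAddCommGroup X] [NormedSpace ℝ X] [ProperSpace X] (n : ℕ) :
    ∀ {Y : Type} [NormedAddCommGroup Y] [NormedSpace ℝ Y] [CompleteSpace Y] (m : ℕ) {H : X → Y},
      ContDiff ℝ n H → ContDiff ℝ n (fun x => ∫ t in (0:ℝ)..1, t ^ m • H (t • x)) := by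
  induction n with
  | zero =>
    intro Y _ _ _ m H hH
    have hc := hH.continuous
    rw [Nat.cast_zero, contDiff_zero]
    apply intervalIntegral.continuous_parametric_intervalIntegral_of_continuous'
    simp only [Function.uncurry_def]
    fun_prop
  | succ n ih =>
    intro Y _ _ _ m H hH
    have h1 : ContDiff ℝ 1 H := hH.of_le (by norm_cast; omega)
    have hd := fun x => param_hasFDerivAt m h1 x
    have hH' : ContDiff ℝ n (fderiv ℝ H) := by
      push_cast at hH
      exact (contDiff_succ_iff_fderiv.1 hH).2.2
    push_cast
    rw [contDiff_succ_iff_fderiv]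
    refine ⟨fun x => (hd x).differentiableAt, by simp, ?_⟩
    have : fderiv ℝ (fun x => ∫ t in (0:ℝ)..1, t ^ m • H (t • x)) =
        fun x => ∫ t in (0:ℝ)..1, t ^ (m + 1) • fderiv ℝ H (t • x) := by
      ext1 x; exact (hd x).fderiv
    rw [this]
    exact ih (m + 1) hH'

section
variable {m : ℕ}

lemma rA_norm (h : ℝ → ℝ) (x : EuclideanSpace ℝ (Fin (m + 1))) :
    rA m h ‖x‖ = ∫ t in (0:ℝ)..1, t ^ m • (fun y : EuclideanSpace ℝ (Fin (m + 1)) => h ‖y‖) (t • x) := by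
  apply intervalIntegral.integral_congr
  intro t ht
  rw [uIcc_of_le zero_le_one] at ht
  simp only [smul_eq_mul, norm_smul, Real.norm_eq_abs, abs_of_nonneg ht.1]
  rw [mul_comm ‖x‖]

lemma rA_norm_contDiff {n : ℕ} {h : ℝ → ℝ}
    (hH : ContDiff ℝ n (fun x : EuclideanSpace ℝ (Fin (m + 1)) => h ‖x‖)) :
    ContDiff ℝ n (fun x : EuclideanSpace ℝ (Fin (m + 1)) => rA m h ‖x‖) := by
  simp only [rA_norm]
  exact param_contDiff n m hH

lemma rL_norm_fderiv {h : ℝ → ℝ} (hh : Continuous h) (c : ℝ) (x : EuclideanSpace ℝ (Fin (m + 1))) :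
    HasFDerivAt (fun x : EuclideanSpace ℝ (Fin (m + 1)) => c + rL m h ‖x‖)
      (rA m h ‖x‖ • innerSL ℝ x) x := by
  refine HasFDerivAt.const_add c ?_
  by_cases hx : x = 0
  · subst hx
    have h1 := rL_deriv m hh 0
    rw [rD_zero, hasDerivAt_iff_isLittleO] at h1
    rw [hasFDerivAt_iff_isLittleO]
    have h2 : Tendsto (fun y : EuclideanSpace ℝ (Fin (m + 1)) => ‖y‖) (𝓝 0) (𝓝 0) := by
      simpa using (continuous_norm (E := EuclideanSpace ℝ (Fin (m + 1)))).tendsto 0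
    have h3 := h1.comp_tendsto h2
    simp only [Function.comp_def, sub_zero, smul_zero, norm_zero, map_zero] at h3 ⊢
    refine (Asymptotics.isLittleO_norm_right.1 ?_)
    simpa using h3
  · have h1 : HasFDerivAt (fun y : EuclideanSpace ℝ (Fin (m + 1)) => ‖y‖) (‖x‖⁻¹ • innerSL ℝ x) x := by
      have h2 : DifferentiableAt ℝ (fun y : EuclideanSpace ℝ (Fin (m + 1)) => ‖y‖) x :=
        (contDiffAt_norm ℝ hx).differentiableAt (by norm_num : (1 : WithTop ℕ∞) ≠ 0)
      have h3 := h2.hasFDerivAt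
      have h4 : HasFDerivAt (fun y : EuclideanSpace ℝ (Fin (m + 1)) => ‖y‖ ^ 2) (2 • innerSL ℝ x) x :=
        (hasStrictFDerivAt_norm_sq x).hasFDerivAt
      have h5 := (h3.pow 2).unique h4
      refine h3.congr_fderiv ?_
      ext v
      have h6 := congrArg (fun L => L v) h5
      have : ‖x‖ ≠ 0 := norm_ne_zero_iff.2 hx
      simp at h6 ⊢
      field_simp
      linarith
    have h2 := (rL_deriv m hh ‖x‖).comp_hasFDerivAt x h1
    refine h2.congr_fderiv ?_
    rw [smul_smul, rD]
    congr 1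
    have : ‖x‖ ≠ 0 := norm_ne_zero_iff.2 hx
    field_simp

lemma rL_norm_contDiff {n : ℕ} {h : ℝ → ℝ} (hh : Continuous h) (c : ℝ)
    (hH : ContDiff ℝ n (fun x : EuclideanSpace ℝ (Fin (m + 1)) => h ‖x‖)) :
    ContDiff ℝ (n + 1 : ℕ) (fun x : EuclideanSpace ℝ (Fin (m + 1)) => c + rL m h ‖x‖) := by
  push_cast
  rw [contDiff_succ_iff_fderiv]
  refine ⟨fun x => (rL_norm_fderiv hh c x).differentiableAt, by simp, ?_⟩
  have : fderiv ℝ (fun x : EuclideanSpace ℝ (Fin (m + 1)) => c + rL m h ‖x‖) =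
      fun x => rA m h ‖x‖ • innerSL ℝ x := by
    ext1 x; exact (rL_norm_fderiv hh c x).fderiv
  rw [this]
  exact (rA_norm_contDiff hH).smul (innerSL ℝ).contDiff

lemma rL_norm_lap {h : ℝ → ℝ} (hh : Continuous h) (c : ℝ)
    (hH : ContDiff ℝ 1 (fun x : EuclideanSpace ℝ (Fin (m + 1)) => h ‖x‖))
    (x : EuclideanSpace ℝ (Fin (m + 1))) :
    lap (fun x : EuclideanSpace ℝ (Fin (m + 1)) => c + rL m h ‖x‖) x = h ‖x‖ := by
  have hA : ContDiff ℝ 1 (fun x : EuclideanSpace ℝ (Fin (m + 1)) => rA m h ‖x‖) :=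
    rA_norm_contDiff (n := 1) hH
  have hAx := (hA.differentiable (by norm_num) x).hasFDerivAt
  set A' := fderiv ℝ (fun x : EuclideanSpace ℝ (Fin (m + 1)) => rA m h ‖x‖) x with hA'
  have h1 : lap (fun x : EuclideanSpace ℝ (Fin (m + 1)) => c + rL m h ‖x‖) x
      = (m + 1) * rA m h ‖x‖ + A' x := by
    have h2 : ∀ i : Fin (m + 1), fderiv ℝ (fun y => fderiv ℝ
        (fun x : EuclideanSpace ℝ (Fin (m + 1)) => c + rL m h ‖x‖) y (EuclideanSpace.single i 1)) x
        (EuclideanSpace.single i 1) = rA m h ‖x‖ + x i * A' (EuclideanSpace.single i 1) := by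
      intro i
      have h3 : (fun y => fderiv ℝ
        (fun x : EuclideanSpace ℝ (Fin (m + 1)) => c + rL m h ‖x‖) y (EuclideanSpace.single i 1))
        = fun y => rA m h ‖y‖ * y i := by
        ext y
        rw [(rL_norm_fderiv hh c y).fderiv]
        simp [EuclideanSpace.inner_single_right]
      rw [h3]
      have h4 : HasFDerivAt (fun y : EuclideanSpace ℝ (Fin (m + 1)) => y i)
          (EuclideanSpace.proj i : EuclideanSpace ℝ (Fin (m + 1)) →L[ℝ] ℝ) x :=
        (EuclideanSpace.proj i : EuclideanSpace ℝ (Fin (m + 1)) →L[ℝ] ℝ).hasFDerivAt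
      have h5 : HasFDerivAt (fun y : EuclideanSpace ℝ (Fin (m + 1)) => rA m h ‖y‖ * y i) _ x := hAx.mul h4
      rw [h5.fderiv]
      simp
    unfold lap
    simp only [h2]
    rw [Finset.sum_add_distrib]
    have h5 : x = ∑ i, x i • EuclideanSpace.single i (1:ℝ) := by
      ext j; simp [Finset.sum_apply, Pi.single_apply]
    conv_rhs => rw [h5, map_sum]
    rw [← h5]
    simp
  rw [h1]
  by_cases hx : x = 0
  · subst hx
    have : rA m h 0 = h 0 / (m + 1) := by
      rw [← rA_const m (h 0) 0]; simp [rA]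
    have h3 : (m:ℝ) + 1 ≠ 0 := by positivity
    simp only [norm_zero, map_zero, this]
    field_simp; simp
  · have hr : 0 < ‖x‖ := norm_pos_iff.2 hx
    set r := ‖x‖ with hrdef
    have hray : HasDerivAt (fun s : ℝ => rA m h ‖s • x‖) (A' x) 1 := by
      have h4 : HasDerivAt (fun s : ℝ => s • x) x 1 := by
        simpa using (hasDerivAt_id (1:ℝ)).smul_const x
      have h5 : HasFDerivAt (fun x : EuclideanSpace ℝ (Fin (m + 1)) => rA m h ‖x‖) A' ((1:ℝ) • x) := by
        simpa using hAx
      exact h5.comp_hasDerivAt 1 h4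
    have hl : HasDerivAt (fun s : ℝ => (s * r) ^ (m + 1) * rA m h ‖s • x‖)
        ((m + 1) * r ^ (m + 1) * rA m h r + r ^ (m + 1) * A' x) 1 := by
      have h4 : HasDerivAt (fun s : ℝ => (s * r) ^ (m + 1)) (((m + 1 : ℕ) : ℝ) * (1 * r) ^ m * r) 1 := by
        exact (((hasDerivAt_id (1:ℝ)).mul_const r).pow (m + 1)).congr_deriv (by simp)
      have h5 := h4.mul hray
      refine h5.congr_deriv ?_
      simp only [one_smul, ← hrdef]; push_cast; ring
    have hr' : HasDerivAt (fun s : ℝ => rI m h (s * r)) (r ^ m * h r * r) 1 := by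
      have h4 : HasDerivAt (fun s : ℝ => s * r) r 1 := by
        simpa using (hasDerivAt_id (1:ℝ)).mul_const r
      have h6 : HasDerivAt (rI m h) (r ^ m * h r) (1 * r) := by simpa using rI_deriv m hh r
      exact h6.comp 1 h4
    have he : (fun s : ℝ => rI m h (s * r)) =ᶠ[𝓝 1] (fun s : ℝ => (s * r) ^ (m + 1) * rA m h ‖s • x‖) := by
      filter_upwards [lt_mem_nhds (zero_lt_one (α := ℝ))] with s hs
      rw [← pow_mul_rD, rD, norm_smul, Real.norm_eq_abs, abs_of_pos hs, pow_succ]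
      ring
    have h7 := (hr'.congr_of_eventuallyEq he.symm).unique hl
    have h8 : r ^ (m + 1) ≠ 0 := by positivity
    apply mul_left_cancel₀ h8
    rw [pow_succ] at h7 ⊢
    linarith

end

lemma rG_one_explicit (m : ℕ) (r : ℝ) :
    rG m (fun _ => 1) r = (1 - r ^ 2) ^ 2 / (8 * (m + 1) * (m + 3)) := by
  have hm : (m:ℝ) + 1 ≠ 0 := by positivity
  have hm3 : (m:ℝ) + 3 ≠ 0 := by positivity
  have h2 : ∀ r, rA m (fun s => s ^ 2) r = r ^ 2 / (m + 3) := by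
    intro r
    have e : ∀ t : ℝ, t ^ m * (r * t) ^ 2 = t ^ (m + 2) * r ^ 2 := fun t => by ring
    simp only [rA, e, intervalIntegral.integral_mul_const, integral_pow]
    push_cast
    have : (m:ℝ) + 2 + 1 ≠ 0 := by positivity
    simp
    field_simp; ring
  have h3 : ∀ r, rL m (fun s => s ^ 2) r = r ^ 4 / (4 * (m + 3)) := by
    intro r
    have e : ∀ s : ℝ, s * (s ^ 2 / (m + 3)) = s ^ 3 * (1 / ((m:ℝ) + 3)) := fun t => by ring
    simp only [rL, rD, h2, e, intervalIntegral.integral_mul_const, integral_pow]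
    push_cast
    field_simp; norm_num
  have h4 : rL m (fun _ => 1) = fun r => (1 / (2 * ((m:ℝ) + 1))) * r ^ 2 := by
    ext r; rw [rL_const]; field_simp
  have h5 : rZ m (fun _ => 1) = fun r => (1 / (2 * ((m:ℝ) + 1))) * r ^ 2 + (-(1 / (2 * (m + 3)))) := by
    ext r
    rw [rZ, h4, rA_smul, h2]
    field_simp; ring
  have h6 : ∀ r, rL m (rZ m (fun _ => 1)) r = (1 / (2 * (m + 1))) * (r ^ 4 / (4 * (m + 3)))
      + (-(1 / (2 * (m + 3)))) / (m + 1) * r ^ 2 / 2 := by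
    intro r
    rw [h5, rL_add m (by fun_prop) (by fun_prop), rL_smul, h3, rL_const]
  rw [rG, h6, h6]
  field_simp; ring

lemma exists_cutoff {κ : ℝ} (hκ : κ < 1) : ∃ f : ℝ → ℝ, ContDiff ℝ 2 f ∧
    ∀ t ≤ κ, f t = ((1 - t) ^ 2)⁻¹ := by
  set k := (κ + 1) / 2 with hk
  have h1 : κ < k := by rw [hk]; linarith
  have h2 : k < 1 := by rw [hk]; linarith
  refine ⟨fun t => Real.smoothTransition ((k - t) / (k - κ)) * ((1 - t) ^ 2)⁻¹, ?_, ?_⟩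
  · rw [contDiff_iff_contDiffAt]
    intro t
    by_cases ht : t < 1
    · have h3 : (1 - t) ^ 2 ≠ 0 := by
        have : 0 < 1 - t := by linarith
        positivity
      refine ContDiffAt.mul ?_ (ContDiffAt.inv (by fun_prop) h3)
      exact (Real.smoothTransition.contDiffAt).comp t (by fun_prop)
    · have : (fun t => Real.smoothTransition ((k - t) / (k - κ)) * ((1 - t) ^ 2)⁻¹) =ᶠ[𝓝 t] fun _ => 0 := by
        filter_upwards [lt_mem_nhds (show k < t by linarith)] with s hs
        rw [Real.smoothTransition.zero_of_nonpos, zero_mul]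
        apply div_nonpos_of_nonpos_of_nonneg <;> linarith
      exact contDiffAt_const.congr_of_eventuallyEq this
  · intro t ht
    simp only
    rw [Real.smoothTransition.one_of_one_le, one_mul]
    rw [le_div_iff₀ (by linarith)]; linarith

section
variable {m : ℕ}

noncomputable def ph (α β r : ℝ) : ℝ := (α - β / 2) + (β / 2) * r ^ 2

/-- the Laplacian profile -/
noncomputable def hZ (m : ℕ) (β : ℝ) (g : ℝ → ℝ) (r : ℝ) : ℝ := β * (m + 1) + rZ m g r

lemma hZ_cont (β : ℝ) {g : ℝ → ℝ} (hg : Continuous g) : Continuous (hZ m β g) :=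
  continuous_const.add (rZ_cont m hg)

lemma hZ_eq (β : ℝ) (g : ℝ → ℝ) (r : ℝ) :
    hZ m β g r = (β * (m + 1) - (m + 1) * rA m (rL m g) 1) + rL m g r := by
  unfold hZ rZ; ring

lemma ph_eq (α β : ℝ) {g : ℝ → ℝ} (hg : Continuous g) (r : ℝ) :
    ph α β r + rG m g r = (α - β / 2 - rL m (rZ m g) 1) + rL m (hZ m β g) r := by
  have h1 : hZ m β g = fun s => (fun _ => β * ((m:ℝ) + 1)) s + rZ m g s := rfl
  rw [h1, rL_add m continuous_const (rZ_cont m hg), rL_const, ph, rG]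
  have : (m:ℝ) + 1 ≠ 0 := by positivity
  field_simp; ring

lemma hZ_contDiff {n : ℕ} (β : ℝ) {g : ℝ → ℝ} (hg : Continuous g)
    (hG : ContDiff ℝ n (fun x : EuclideanSpace ℝ (Fin (m + 1)) => g ‖x‖)) :
    ContDiff ℝ (n + 1 : ℕ) (fun x : EuclideanSpace ℝ (Fin (m + 1)) => hZ m β g ‖x‖) := by
  simp only [hZ_eq]
  exact rL_norm_contDiff hg _ hG

lemma sol_contDiff {n : ℕ} (α β : ℝ) {g : ℝ → ℝ} (hg : Continuous g)
    (hG : ContDiff ℝ n (fun x : EuclideanSpace ℝ (Fin (m + 1)) => g ‖x‖)) :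
    ContDiff ℝ (n + 2 : ℕ) (fun x : EuclideanSpace ℝ (Fin (m + 1)) => ph α β ‖x‖ + rG m g ‖x‖) := by
  simp only [ph_eq α β hg]
  exact rL_norm_contDiff (hZ_cont β hg) _ (hZ_contDiff β hg hG)

lemma rA_hZ_one (β : ℝ) {g : ℝ → ℝ} (hg : Continuous g) : rA m (hZ m β g) 1 = β := by
  have h1 : hZ m β g = fun s => (fun _ => β * ((m:ℝ) + 1)) s + rZ m g s := rfl
  have h2 := rD_rZ_one m hg
  rw [rD, one_mul] at h2
  rw [h1, rA_add m continuous_const (rZ_cont m hg), rA_const, h2]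
  have : (m:ℝ) + 1 ≠ 0 := by positivity
  field_simp; ring

lemma exists_sol {α β lam : ℝ} (hlam : 0 < lam) (hβ : β ≤ 0) {v : ℝ → ℝ}
    (hv : Continuous v) (hv1 : ∀ r, v r < 1)
    (hfix : ∀ r ∈ Icc (0:ℝ) 1, v r = ph α β r + rG m (fun s => lam * ((1 - v s) ^ 2)⁻¹) r) :
    ∃ u, IsClassicalSolutionAB (m + 1) lam α β u ∧ ∀ x, ‖x‖ ≤ 1 → u x = v ‖x‖ := by
  obtain ⟨r0, -, hr0⟩ := isCompact_Icc.exists_isMaxOn (nonempty_Icc.2 (zero_le_one (α := ℝ))) hv.continuousOn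
  obtain ⟨r1, -, hr1⟩ := isCompact_Icc.exists_isMinOn (nonempty_Icc.2 (zero_le_one (α := ℝ))) hv.continuousOn
  obtain ⟨f, hf, hf'⟩ := exists_cutoff (hv1 r0)
  set g0 : ℝ → ℝ := fun s => lam * ((1 - v s) ^ 2)⁻¹ with hg0
  have hg0c : Continuous g0 := F_cont lam hv hv1
  set u1 : ℝ → ℝ := fun r => ph α β r + rG m g0 r with hu1
  have hphc : Continuous (ph α β) := by unfold ph; fun_prop
  have hu1c : Continuous u1 := hphc.add (rG_cont m hg0c)
  have hu1C : ContDiff ℝ 2 (fun x : EuclideanSpace ℝ (Fin (m + 1)) => u1 ‖x‖) := by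
    have := sol_contDiff (m := m) (n := 0) α β hg0c
      (by rw [Nat.cast_zero, contDiff_zero]; exact hg0c.comp continuous_norm)
    exact_mod_cast this
  set g1 : ℝ → ℝ := fun r => lam * f (u1 r) with hg1
  have hg1c : Continuous g1 := continuous_const.mul (hf.continuous.comp hu1c)
  have hg1C : ContDiff ℝ 2 (fun x : EuclideanSpace ℝ (Fin (m + 1)) => g1 ‖x‖) :=
    contDiff_const.mul (hf.comp hu1C)
  have hg10 : ∀ r ∈ Icc (0:ℝ) 1, g1 r = g0 r := by
    intro r hr
    simp only [hg1, hg0, hu1]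
    rw [← hfix r hr, hf' _ (hr0 hr)]
  have hg2 : ∀ r ∈ Icc (0:ℝ) 1, v r = ph α β r + rG m g1 r := by
    intro r hr
    rw [hfix r hr, rG_congr m hg10 r hr]
  have hu4 := sol_contDiff (m := m) (n := 2) α β hg1c (by exact_mod_cast hg1C)
  have hnm : ∀ x : EuclideanSpace ℝ (Fin (m + 1)), ‖x‖ ≤ 1 → ‖x‖ ∈ Icc (0:ℝ) 1 :=
    fun x hx => ⟨norm_nonneg _, hx⟩
  have hlap : lap (fun x : EuclideanSpace ℝ (Fin (m + 1)) => ph α β ‖x‖ + rG m g1 ‖x‖)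
      = fun x => hZ m β g1 ‖x‖ := by
    ext x
    simp only [ph_eq α β hg1c]
    exact rL_norm_lap (hZ_cont β hg1c) _ ((hZ_contDiff (n := 2) β hg1c (by exact_mod_cast hg1C)).of_le (by norm_cast)) x
  refine ⟨fun x => ph α β ‖x‖ + rG m g1 ‖x‖, ?_, fun x hx => (hg2 _ (hnm x hx)).symm⟩
  constructor
  · exact (by exact_mod_cast hu4 : ContDiff ℝ 4 _).contDiffOn
  · intro x hx
    rw [mem_ball_zero_iff] at hx
    have h0 : α ≤ ph α β ‖x‖ := by
      have h00 : 0 ≤ 1 - ‖x‖ ^ 2 := by nlinarith [norm_nonneg x]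
      unfold ph
      nlinarith [mul_nonneg (neg_nonneg.2 hβ) h00]
    have hε : 0 < lam * ((1 - v r1) ^ 2)⁻¹ := by
      have : 0 < 1 - v r1 := by linarith [hv1 r1]
      positivity
    have h1 : rG m (fun s => lam * ((1 - v r1) ^ 2)⁻¹ * (fun _ => 1) s) ‖x‖ ≤ rG m g1 ‖x‖ := by
      apply rG_mono m (by fun_prop) hg1c _ _ (hnm x hx.le)
      intro r hr
      rw [hg10 r hr, hg0]
      simp only [mul_one]
      exact mul_le_mul_of_nonneg_left (F_mono (hr1 hr) (hv1 r)) hlam.le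
    rw [rG_smul, rG_one_explicit] at h1
    have h2 : 0 < (1 - ‖x‖ ^ 2) ^ 2 / (8 * ((m:ℝ) + 1) * (m + 3)) := by
      have : 0 < 1 - ‖x‖ ^ 2 := by nlinarith [norm_nonneg x]
      positivity
    have := mul_pos hε h2
    linarith
  · intro x hx
    rw [mem_ball_zero_iff] at hx
    rw [← hg2 _ (hnm x hx.le)]; exact hv1 _
  · intro x hx
    rw [mem_ball_zero_iff] at hx
    rw [biharm, hlap]
    simp only [hZ_eq]
    rw [rL_norm_lap hg1c _ (hg1C.of_le (by norm_num)), ← hg2 _ (hnm x hx.le), hg10 _ (hnm x hx.le), hg0,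
      div_eq_mul_inv]
  · intro x hx
    simp only [hx, rG_one, ph]; ring
  · intro x hx
    have hx0 : x ≠ 0 := by intro h; rw [h, norm_zero] at hx; norm_num at hx
    have hU : UniqueDiffWithinAt ℝ (closedBall (0 : EuclideanSpace ℝ (Fin (m+1))) 1) x := by
      apply uniqueDiffWithinAt_convex (convex_closedBall _ _)
      · rw [interior_closedBall _ one_ne_zero]; exact nonempty_ball.2 one_pos
      · rw [isClosed_closedBall.closure_eq, mem_closedBall_zero_iff]; exact hx.le
    have h1 := rL_norm_fderiv (hZ_cont (m := m) β hg1c) (α - β / 2 - rL m (rZ m g1) 1) x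
    simp only [ph_eq α β hg1c]
    rw [h1.hasFDerivWithinAt.fderivWithin hU]
    simp [hx, rA_hZ_one β hg1c]

end

section
variable {m : ℕ}

lemma lap_eq_basis {N : ℕ} {u : EuclideanSpace ℝ (Fin N) → ℝ} {x : EuclideanSpace ℝ (Fin N)}
    (hu : ContDiffAt ℝ 2 u x) (v : OrthonormalBasis (Fin N) ℝ (EuclideanSpace ℝ (Fin N))) :
    lap u x = ∑ i, fderiv ℝ (fderiv ℝ u) x (v i) (v i) := by
  have hd : DifferentiableAt ℝ (fderiv ℝ u) x :=
    (hu.fderiv_right (m := 1) (by norm_num)).differentiableAt (by norm_num)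
  have h1 : lap u x = ∑ i, fderiv ℝ (fderiv ℝ u) x (EuclideanSpace.single i 1) (EuclideanSpace.single i 1) := by
    unfold lap
    refine Finset.sum_congr rfl fun i _ => ?_
    have := (hd.hasFDerivAt.clm_apply (hasFDerivAt_const (EuclideanSpace.single i (1:ℝ)) x)).fderiv
    rw [this]; simp
  rw [h1]
  have h2 := congrFun (InnerProductSpace.laplacian_eq_iteratedFDeriv_orthonormalBasis u
    (EuclideanSpace.basisFun (Fin N) ℝ)) x
  rw [InnerProductSpace.laplacian_eq_iteratedFDeriv_orthonormalBasis u v] at h2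
  simp only [iteratedFDeriv_two_apply] at h2
  simpa using h2.symm

lemma lap_comp {N : ℕ} {u : EuclideanSpace ℝ (Fin N) → ℝ} {x : EuclideanSpace ℝ (Fin N)}
    (R : EuclideanSpace ℝ (Fin N) ≃ₗᵢ[ℝ] EuclideanSpace ℝ (Fin N))
    (hu : ContDiffAt ℝ 2 u (R x)) : lap (fun y => u (R y)) x = lap u (R x) := by
  rw [lap_eq_basis hu ((EuclideanSpace.basisFun (Fin N) ℝ).map R),
    lap_eq_basis (u := fun y => u (R y)) (hu.comp x (R.contDiff.contDiffAt)) (EuclideanSpace.basisFun (Fin N) ℝ)]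
  have h1 : fderiv ℝ (fun y => u (R y)) = fun y => (fderiv ℝ u (R y)).comp (R : EuclideanSpace ℝ (Fin N) →L[ℝ] EuclideanSpace ℝ (Fin N)) := by
    ext1 y
    exact R.toContinuousLinearEquiv.comp_right_fderiv (f := u)
  have hd : DifferentiableAt ℝ (fderiv ℝ u) (R x) :=
    (hu.fderiv_right (m := 1) (by norm_num)).differentiableAt (by norm_num)
  have h2 : HasFDerivAt (fun y => fderiv ℝ u (R y)) _ x := hd.hasFDerivAt.comp x R.toContinuousLinearEquiv.hasFDerivAt
  refine Finset.sum_congr rfl fun i _ => ?_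
  have h3 := (h2.clm_comp (hasFDerivAt_const (R : EuclideanSpace ℝ (Fin N) →L[ℝ] EuclideanSpace ℝ (Fin N)) x)).fderiv
  rw [h1, h3]
  simp

lemma lap_contDiffOn {N : ℕ} {u : EuclideanSpace ℝ (Fin N) → ℝ}
    (hu : ContDiffOn ℝ 4 u (ball 0 1)) : ContDiffOn ℝ 2 (lap u) (ball 0 1) := by
  unfold lap
  refine ContDiffOn.sum fun i _ => ?_
  have h1 : ContDiffOn ℝ 3 (fderiv ℝ u) (ball 0 1) := hu.fderiv_of_isOpen isOpen_ball (by norm_num)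
  have h2 : ContDiffOn ℝ 3 (fun y => fderiv ℝ u y (EuclideanSpace.single i 1)) (ball 0 1) :=
    h1.clm_apply contDiffOn_const
  have h3 : ContDiffOn ℝ 2 (fderiv ℝ (fun y => fderiv ℝ u y (EuclideanSpace.single i 1))) (ball 0 1) :=
    h2.fderiv_of_isOpen isOpen_ball (by norm_num)
  exact h3.clm_apply contDiffOn_const

end

section
variable {m : ℕ}

lemma mem_ball_e {r : ℝ} (hr : |r| < 1) (i : Fin (m + 1)) :
    r • EuclideanSpace.single i (1:ℝ) ∈ ball (0 : EuclideanSpace ℝ (Fin (m + 1))) 1 := by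
  rw [mem_ball_zero_iff, norm_smul]; simpa using hr

lemma radial_lap {w : EuclideanSpace ℝ (Fin (m + 1)) → ℝ} (hw : ContDiffOn ℝ 2 w (ball 0 1))
    (hrad : ∀ x ∈ ball (0 : EuclideanSpace ℝ (Fin (m + 1))) 1, ∀ y, ‖x‖ = ‖y‖ → w x = w y)
    {r : ℝ} (hr0 : 0 < r) (hr1 : r < 1) :
    lap w (r • EuclideanSpace.single 0 1) =
      fderiv ℝ (fun y => fderiv ℝ w y (EuclideanSpace.single 0 1)) (r • EuclideanSpace.single 0 1)
        (EuclideanSpace.single 0 1)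
      + m * (fderiv ℝ w (r • EuclideanSpace.single 0 1) (EuclideanSpace.single 0 1) / r) := by
  set e : EuclideanSpace ℝ (Fin (m + 1)) := EuclideanSpace.single 0 1 with he
  have hre : r • e ∈ ball (0 : EuclideanSpace ℝ (Fin (m + 1))) 1 :=
    mem_ball_e (by rw [abs_of_pos hr0]; exact hr1) 0
  have hd1 : ∀ y ∈ ball (0 : EuclideanSpace ℝ (Fin (m + 1))) 1, HasFDerivAt w (fderiv ℝ w y) y := fun y hy =>
    ((hw.contDiffAt (isOpen_ball.mem_nhds hy)).differentiableAt (by norm_num)).hasFDerivAt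
  have hd2 : ∀ (v : EuclideanSpace ℝ (Fin (m + 1))), ∀ y ∈ ball (0 : EuclideanSpace ℝ (Fin (m + 1))) 1,
      HasFDerivAt (fun z => fderiv ℝ w z v) (fderiv ℝ (fun z => fderiv ℝ w z v) y) y := by
    intro v y hy
    have h1 : ContDiffOn ℝ 1 (fderiv ℝ w) (ball 0 1) := hw.fderiv_of_isOpen isOpen_ball (by norm_num)
    exact (((h1.clm_apply contDiffOn_const).contDiffAt (isOpen_ball.mem_nhds hy)).differentiableAt
      (by norm_num)).hasFDerivAt
  have key : ∀ i : Fin m, fderiv ℝ (fun y => fderiv ℝ w y (EuclideanSpace.single i.succ 1)) (r • e)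
        (EuclideanSpace.single i.succ 1) = fderiv ℝ w (r • e) e / r := by
    intro i
    set f : EuclideanSpace ℝ (Fin (m + 1)) := EuclideanSpace.single i.succ 1 with hf
    have hline : ∀ t : ℝ, HasDerivAt (fun t : ℝ => r • e + t • f) f t := fun t => by
      simpa using ((hasDerivAt_id t).smul_const f).const_add (r • e)
    have hlc : Continuous (fun t : ℝ => r • e + t • f) := by fun_prop
    have hnear : ∀ᶠ t : ℝ in 𝓝 0, r • e + t • f ∈ ball (0 : EuclideanSpace ℝ (Fin (m + 1))) 1 := by
      apply hlc.continuousAt.eventually_mem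
      apply isOpen_ball.mem_nhds; simpa using hre
    have hnorm : ∀ t : ℝ, ‖r • e + t • f‖ = ‖Real.sqrt (r ^ 2 + t ^ 2) • e‖ := by
      intro t
      rw [norm_smul, EuclideanSpace.norm_eq (r • e + t • f)]
      have hn : ‖e‖ = 1 := by simp [he]
      rw [hn, Real.norm_eq_abs, abs_of_nonneg (Real.sqrt_nonneg _), mul_one]
      congr 1
      rw [Fin.sum_univ_succ, Finset.sum_eq_single i]
      · simp [he, hf]
      · intro b _ hb
        simp [he, hf, hb]
      · simp
    have hlhs : HasDerivAt (fun t : ℝ => fderiv ℝ w (r • e + t • f) f)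
        (fderiv ℝ (fun y => fderiv ℝ w y f) (r • e) f) 0 := by
      have h1 : HasFDerivAt (fun z => fderiv ℝ w z f) (fderiv ℝ (fun z => fderiv ℝ w z f) (r • e))
          (r • e + (0:ℝ) • f) := by simpa using hd2 f _ hre
      exact h1.comp_hasDerivAt 0 (hline 0)
    have hsq : ∀ t : ℝ, HasDerivAt (fun t : ℝ => Real.sqrt (r ^ 2 + t ^ 2)) (t / Real.sqrt (r ^ 2 + t ^ 2)) t := by
      intro t
      have h1 : HasDerivAt (fun t : ℝ => r ^ 2 + t ^ 2) (2 * t) t := by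
        simpa using (hasDerivAt_pow 2 t).const_add (r ^ 2)
      have h2 := h1.sqrt (by positivity)
      refine h2.congr_deriv ?_
      field_simp
    have hq : ∀ᶠ t : ℝ in 𝓝 0, fderiv ℝ w (r • e + t • f) f =
        (fderiv ℝ w (Real.sqrt (r ^ 2 + t ^ 2) • e) e / Real.sqrt (r ^ 2 + t ^ 2)) * t := by
      filter_upwards [eventually_eventually_nhds.2 hnear] with t ht
      have ht0 := ht.self_of_nhds
      have h1 : HasDerivAt (fun t : ℝ => w (r • e + t • f)) (fderiv ℝ w (r • e + t • f) f) t :=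
        (hd1 _ ht0).comp_hasDerivAt t (hline t)
      have hs0 : Real.sqrt (r ^ 2 + t ^ 2) • e ∈ ball (0 : EuclideanSpace ℝ (Fin (m + 1))) 1 := by
        rw [mem_ball_zero_iff] at ht0 ⊢; rwa [← hnorm]
      have h2 : HasDerivAt (fun t : ℝ => w (Real.sqrt (r ^ 2 + t ^ 2) • e))
          (fderiv ℝ w (Real.sqrt (r ^ 2 + t ^ 2) • e) ((t / Real.sqrt (r ^ 2 + t ^ 2)) • e)) t :=
        (hd1 _ hs0).comp_hasDerivAt t ((hsq t).smul_const e)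
      have h3 : (fun t : ℝ => w (r • e + t • f)) =ᶠ[𝓝 t] (fun t : ℝ => w (Real.sqrt (r ^ 2 + t ^ 2) • e)) := by
        filter_upwards [ht] with s hs
        exact hrad _ hs _ (hnorm s)
      have h4 := h1.unique (h2.congr_of_eventuallyEq h3)
      rw [h4, map_smul, smul_eq_mul]; ring
    have hsq0 : Real.sqrt (r ^ 2 + 0 ^ 2) = r := by
      rw [zero_pow two_ne_zero, add_zero, Real.sqrt_sq hr0.le]
    have hc : DifferentiableAt ℝ (fun t : ℝ => fderiv ℝ w (Real.sqrt (r ^ 2 + t ^ 2) • e) e / Real.sqrt (r ^ 2 + t ^ 2)) 0 := by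
      refine DifferentiableAt.div ?_ (hsq 0).differentiableAt ?_
      · have h1 : HasFDerivAt (fun z => fderiv ℝ w z e) (fderiv ℝ (fun z => fderiv ℝ w z e) (r • e))
          (Real.sqrt (r ^ 2 + 0 ^ 2) • e) := by rw [hsq0]; exact hd2 e _ hre
        exact (h1.comp_hasDerivAt 0 ((hsq 0).smul_const e)).differentiableAt
      · rw [hsq0]; exact hr0.ne'
    have hrhs := hc.hasDerivAt.mul (hasDerivAt_id (0:ℝ))
    have h5 := hlhs.unique (hrhs.congr_of_eventuallyEq hq)
    rw [h5, hsq0]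
    simp
  unfold lap
  rw [Fin.sum_univ_succ]
  simp only [key]
  simp [← he]

lemma const_of_deriv {Q : ℝ → ℝ} (hc : ContinuousOn Q (Ico 0 1))
    (hd : ∀ r ∈ Ioo (0:ℝ) 1, HasDerivAt Q 0 r) : ∀ r ∈ Ico (0:ℝ) 1, Q r = Q 0 := by
  intro r hr
  rcases hr.1.eq_or_lt with h | h
  · rw [← h]
  · obtain ⟨c, hc1, hc2⟩ := exists_hasDerivAt_eq_slope Q (fun _ => 0) h
      (hc.mono fun x hx => ⟨hx.1, hx.2.trans_lt hr.2⟩) (fun x hx => hd x ⟨hx.1, hx.2.trans hr.2⟩)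
    rw [eq_comm, div_eq_zero_iff] at hc2
    rcases hc2 with h2 | h2 <;> linarith

lemma radial_rep {w : EuclideanSpace ℝ (Fin (m + 1)) → ℝ} (hw : ContDiffOn ℝ 2 w (ball 0 1))
    (hrad : ∀ x ∈ ball (0 : EuclideanSpace ℝ (Fin (m + 1))) 1, ∀ y, ‖x‖ = ‖y‖ → w x = w y)
    {h : ℝ → ℝ} (hh : Continuous h)
    (hl : ∀ r ∈ Ico (0:ℝ) 1, lap w (r • EuclideanSpace.single 0 1) = h r) :
    (∀ r ∈ Ico (0:ℝ) 1, w (r • EuclideanSpace.single 0 1) = w 0 + rL m h r) ∧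
    ∀ r ∈ Ico (0:ℝ) 1, HasDerivAt (fun r : ℝ => w (r • EuclideanSpace.single 0 1)) (rD m h r) r := by
  set e : EuclideanSpace ℝ (Fin (m + 1)) := EuclideanSpace.single 0 1 with he
  have hd1 : ∀ r : ℝ, |r| < 1 → HasDerivAt (fun r : ℝ => w (r • e)) (fderiv ℝ w (r • e) e) r := by
    intro r hr
    have h1 : HasFDerivAt w (fderiv ℝ w (r • e)) (r • e) :=
      ((hw.contDiffAt (isOpen_ball.mem_nhds (mem_ball_e hr 0))).differentiableAt (by norm_num)).hasFDerivAt
    have h2 : HasDerivAt (fun r : ℝ => r • e) e r := by simpa using (hasDerivAt_id r).smul_const e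
    exact h1.comp_hasDerivAt r h2
  have hd2 : ∀ r : ℝ, |r| < 1 → HasDerivAt (fun r : ℝ => fderiv ℝ w (r • e) e)
      (fderiv ℝ (fun y => fderiv ℝ w y e) (r • e) e) r := by
    intro r hr
    have h1 : ContDiffOn ℝ 1 (fderiv ℝ w) (ball 0 1) := hw.fderiv_of_isOpen isOpen_ball (by norm_num)
    have h3 := (((h1.clm_apply (contDiffOn_const (c := e))).contDiffAt
      (isOpen_ball.mem_nhds (mem_ball_e hr 0))).differentiableAt (by norm_num)).hasFDerivAt
    have h2 : HasDerivAt (fun r : ℝ => r • e) e r := by simpa using (hasDerivAt_id r).smul_const e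
    exact h3.comp_hasDerivAt r h2
  set P : ℝ → ℝ := fun r => fderiv ℝ w (r • e) e with hP
  have hP0 : P 0 = 0 := by
    have h1 := hd1 0 (by simp)
    have h2 : HasDerivAt (fun r : ℝ => w ((-r) • e)) (-(P 0)) 0 := by
      have h3 : HasDerivAt (fun r : ℝ => w (r • e)) (P 0) (-0) := by rw [neg_zero]; exact h1
      have := h3.comp (0:ℝ) (hasDerivAt_neg (0:ℝ))
      simpa [Function.comp_def] using this
    have h4 : (fun r : ℝ => w (r • e)) =ᶠ[𝓝 0] fun r : ℝ => w ((-r) • e) := by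
      filter_upwards [Ioo_mem_nhds (show (-1:ℝ) < 0 by norm_num) one_pos] with r hr
      exact hrad _ (mem_ball_e (abs_lt.2 hr) 0) _ (by rw [norm_smul, norm_smul, norm_neg])
    have := h1.unique (h2.congr_of_eventuallyEq h4)
    simp only [hP] at this ⊢
    linarith
  have habs : ∀ r ∈ Ico (0:ℝ) 1, |r| < 1 := fun r hr => by rw [abs_of_nonneg hr.1]; exact hr.2
  have hPD : ∀ r ∈ Ico (0:ℝ) 1, P r = rD m h r := by
    have h1 : ∀ r ∈ Ico (0:ℝ) 1, r ^ m * P r - rI m h r = (0:ℝ) ^ m * P 0 - rI m h 0 := by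
      apply const_of_deriv (Q := fun r => r ^ m * P r - rI m h r)
      · intro r hr
        exact (((continuousAt_id.pow m).mul (hd2 r (habs r hr)).continuousAt).sub
          (rI_cont m hh).continuousAt).continuousWithinAt
      · intro r hr
        have h2 := hd2 r (habs r ⟨hr.1.le, hr.2⟩)
        have h3 := ((hasDerivAt_pow m r).mul h2).sub (rI_deriv m hh r)
        refine h3.congr_deriv ?_
        have h4 := radial_lap hw hrad hr.1 hr.2
        rw [hl r ⟨hr.1.le, hr.2⟩] at h4
        rw [← he] at h4
        change _ = _ + _ * (P r / r) at h4
        rw [h4]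
        have hr0 : r ≠ 0 := hr.1.ne'
        rcases m with _ | k
        · simp
        · simp only [Nat.add_sub_cancel]
          push_cast
          field_simp
          ring
    intro r hr
    rcases hr.1.eq_or_lt with h0 | h0
    · rw [← h0, hP0, rD_zero]
    · have := h1 r hr
      rw [hP0, rI_zero, mul_zero, sub_zero, ← pow_mul_rD, ← mul_sub] at this
      rcases mul_eq_zero.1 this with h | h
      · exact absurd h (pow_pos h0 m).ne'
      · linarith
  have hder : ∀ r ∈ Ico (0:ℝ) 1, HasDerivAt (fun r : ℝ => w (r • e)) (rD m h r) r := by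
    intro r hr
    rw [← hPD r hr]; exact hd1 r (habs r hr)
  refine ⟨?_, hder⟩
  have h1 : ∀ r ∈ Ico (0:ℝ) 1, w (r • e) - rL m h r = w ((0:ℝ) • e) - rL m h 0 := by
    apply const_of_deriv (Q := fun r => w (r • e) - rL m h r)
    · intro r hr
      exact ((hder r hr).continuousAt.sub (rL_cont m hh).continuousAt).continuousWithinAt
    · intro r hr
      exact ((hder r ⟨hr.1.le, hr.2⟩).sub (rL_deriv m hh r)).congr_deriv (sub_self _)
  intro r hr
  have := h1 r hr
  have h0 : rL m h 0 = 0 := by simp [rL]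
  rw [zero_smul, h0] at this
  linarith

end

lemma lap_congr {N : ℕ} {f g : EuclideanSpace ℝ (Fin N) → ℝ} {x : EuclideanSpace ℝ (Fin N)}
    (h : f =ᶠ[𝓝 x] g) : lap f x = lap g x := by
  unfold lap
  refine Finset.sum_congr rfl fun i _ => ?_
  have h1 : (fun y => fderiv ℝ f y (EuclideanSpace.single i 1)) =ᶠ[𝓝 x]
      fun y => fderiv ℝ g y (EuclideanSpace.single i 1) := by
    filter_upwards [h.fderiv (𝕜 := ℝ)] with y hy
    rw [hy]
  rw [h1.fderiv_eq]

lemma uniq_cb {m : ℕ} {x : EuclideanSpace ℝ (Fin (m + 1))} (hx : ‖x‖ = 1) :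
    UniqueDiffWithinAt ℝ (closedBall (0 : EuclideanSpace ℝ (Fin (m+1))) 1) x := by
  apply uniqueDiffWithinAt_convex (convex_closedBall _ _)
  · rw [interior_closedBall _ one_ne_zero]; exact nonempty_ball.2 one_pos
  · rw [isClosed_closedBall.closure_eq, mem_closedBall_zero_iff]; exact hx.le

section
variable {m : ℕ} {lam α β : ℝ} {u : EuclideanSpace ℝ (Fin (m + 1)) → ℝ}

lemma sol_comp (hu : IsClassicalSolutionAB (m + 1) lam α β u)
    (R : EuclideanSpace ℝ (Fin (m + 1)) ≃ₗᵢ[ℝ] EuclideanSpace ℝ (Fin (m + 1))) :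
    IsClassicalSolutionAB (m + 1) lam α β (fun x => u (R x)) := by
  have hb : ∀ x ∈ ball (0 : EuclideanSpace ℝ (Fin (m + 1))) 1, R x ∈ ball (0 : EuclideanSpace ℝ (Fin (m + 1))) 1 := by
    intro x hx; simpa using hx
  have hcb : MapsTo R (closedBall (0 : EuclideanSpace ℝ (Fin (m + 1))) 1) (closedBall (0 : EuclideanSpace ℝ (Fin (m + 1))) 1) := by
    intro x hx; simpa using hx
  have hu4 : ContDiffOn ℝ 4 u (ball 0 1) := hu.contDiffOn.mono ball_subset_closedBall
  constructor
  · exact hu.contDiffOn.comp R.contDiff.contDiffOn hcb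
  · exact fun x hx => hu.gt_alpha _ (hb x hx)
  · exact fun x hx => hu.lt_one _ (hb x hx)
  · intro x hx
    rw [← hu.eqn _ (hb x hx)]
    unfold biharm
    have h1 : lap (fun x => u (R x)) =ᶠ[𝓝 x] fun y => lap u (R y) := by
      filter_upwards [isOpen_ball.mem_nhds hx] with y hy
      exact lap_comp R ((hu4.contDiffAt (isOpen_ball.mem_nhds (hb y hy))).of_le (by norm_num))
    rw [lap_congr h1]
    exact lap_comp R ((lap_contDiffOn hu4).contDiffAt (isOpen_ball.mem_nhds (hb x hx)))
  · intro x hx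
    exact hu.bdry _ (by simpa using hx)
  · intro x hx
    have hRx : ‖R x‖ = 1 := by simpa using hx
    rw [← hu.bdry_deriv _ hRx]
    have h1 : HasFDerivWithinAt u (fderivWithin ℝ u (closedBall 0 1) (R x)) (closedBall 0 1) (R x) :=
      ((hu.contDiffOn.differentiableOn (by norm_num)) _ (by simpa using hRx.le)).hasFDerivWithinAt
    have h2 := h1.comp x (R.toContinuousLinearEquiv.hasFDerivWithinAt (s := closedBall 0 1)) hcb
    have h3 := h2.fderivWithin (uniq_cb hx)
    have h4 : (fun x => u (R x)) = u ∘ ⇑R := rfl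
    rw [h4, h3]
    simp

lemma exists_rot (x y : EuclideanSpace ℝ (Fin (m + 1))) (h : ‖x‖ = ‖y‖) :
    ∃ R : EuclideanSpace ℝ (Fin (m + 1)) ≃ₗᵢ[ℝ] EuclideanSpace ℝ (Fin (m + 1)), R x = y :=
  ⟨_, Submodule.reflection_sub h⟩

lemma min_radial (hu : IsClassicalSolutionAB (m + 1) lam α β u)
    (hmin : ∀ v, IsClassicalSolutionAB (m + 1) lam α β v →
          ∀ x ∈ ball (0 : EuclideanSpace ℝ (Fin (m + 1))) 1, u x ≤ v x) :
    ∀ x ∈ ball (0 : EuclideanSpace ℝ (Fin (m + 1))) 1, ∀ y, ‖x‖ = ‖y‖ → u x = u y := by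
  intro x hx y hxy
  have hy : y ∈ ball (0 : EuclideanSpace ℝ (Fin (m + 1))) 1 := by
    rw [mem_ball_zero_iff] at hx ⊢; rwa [← hxy]
  obtain ⟨R, hR⟩ := exists_rot x y hxy
  obtain ⟨S, hS⟩ := exists_rot y x hxy.symm
  have h1 := hmin _ (sol_comp hu R) x hx
  have h2 := hmin _ (sol_comp hu S) y hy
  simp only [hR, hS] at h1 h2
  exact le_antisymm h1 h2

lemma profile (hαβ : Admissible α β) (hu : IsClassicalSolutionAB (m + 1) lam α β u)
    (hmin : ∀ v, IsClassicalSolutionAB (m + 1) lam α β v →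
          ∀ x ∈ ball (0 : EuclideanSpace ℝ (Fin (m + 1))) 1, u x ≤ v x) :
    ∃ U : ℝ → ℝ, Continuous U ∧ (∀ r, U r < 1) ∧
      (∀ x ∈ ball (0 : EuclideanSpace ℝ (Fin (m + 1))) 1, u x = U ‖x‖) ∧
      (∀ r ∈ Icc (0:ℝ) 1, U r = ph α β r + rG m (fun s => lam * ((1 - U s) ^ 2)⁻¹) r) ∧
      (∀ x ∈ ball (0 : EuclideanSpace ℝ (Fin (m + 1))) 1,
        lap u x = hZ m β (fun s => lam * ((1 - U s) ^ 2)⁻¹) ‖x‖) := by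
  have hrad := min_radial hu hmin
  have hu4 : ContDiffOn ℝ 4 u (ball 0 1) := hu.contDiffOn.mono ball_subset_closedBall
  have hlrad : ∀ x ∈ ball (0 : EuclideanSpace ℝ (Fin (m + 1))) 1, ∀ y, ‖x‖ = ‖y‖ → lap u x = lap u y := by
    intro x hx y hxy
    have hy : y ∈ ball (0 : EuclideanSpace ℝ (Fin (m + 1))) 1 := by
      rw [mem_ball_zero_iff] at hx ⊢; rwa [← hxy]
    obtain ⟨R, hR⟩ := exists_rot x y hxy
    have h1 : u =ᶠ[𝓝 x] fun y => u (R y) := by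
      filter_upwards [isOpen_ball.mem_nhds hx] with z hz
      exact hrad z hz _ (by simp)
    rw [lap_congr h1, lap_comp R, hR]
    rw [hR]
    exact (hu4.contDiffAt (isOpen_ball.mem_nhds hy)).of_le (by norm_num)
  set e : EuclideanSpace ℝ (Fin (m + 1)) := EuclideanSpace.single 0 1 with he
  have hen : ‖e‖ = 1 := by simp [he]
  have hnr : ∀ r ∈ Icc (0:ℝ) 1, ‖r • e‖ = r := fun r hr => by
    rw [norm_smul, hen, mul_one, Real.norm_eq_abs, abs_of_nonneg hr.1]
  have hcbr : ∀ r ∈ Icc (0:ℝ) 1, r • e ∈ closedBall (0 : EuclideanSpace ℝ (Fin (m + 1))) 1 := fun r hr => by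
    rw [mem_closedBall_zero_iff, hnr r hr]; exact hr.2
  have hbr : ∀ r ∈ Ico (0:ℝ) 1, r • e ∈ ball (0 : EuclideanSpace ℝ (Fin (m + 1))) 1 := fun r hr => by
    rw [mem_ball_zero_iff, hnr r ⟨hr.1, hr.2.le⟩]; exact hr.2
  set U : ℝ → ℝ := fun r => u (cl r • e) with hUdef
  have hUe : ∀ r ∈ Icc (0:ℝ) 1, U r = u (r • e) := fun r hr => by simp only [hUdef, cl_eq hr]
  have hUc : Continuous U := hu.contDiffOn.continuousOn.comp_continuous
    (cl_cont.smul continuous_const) (fun r => hcbr _ (cl_mem r))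
  have hU1 : ∀ r, U r < 1 := by
    intro r
    rcases (cl_mem r).2.eq_or_lt with h | h
    · simp only [hUdef]
      rw [h, hu.bdry _ (by rw [one_smul, hen])]
      linarith [hαβ.1, hαβ.2]
    · exact hu.lt_one _ (hbr _ ⟨(cl_mem r).1, h⟩)
  have hUx : ∀ x ∈ ball (0 : EuclideanSpace ℝ (Fin (m + 1))) 1, u x = U ‖x‖ := by
    intro x hx
    have hx' : ‖x‖ ∈ Icc (0:ℝ) 1 := ⟨norm_nonneg _, (mem_ball_zero_iff.1 hx).le⟩
    rw [hUe _ hx']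
    exact hrad x hx _ (hnr _ hx').symm
  refine ⟨U, hUc, hU1, hUx, ?_⟩
  set g : ℝ → ℝ := fun s => lam * ((1 - U s) ^ 2)⁻¹ with hg
  have hgc : Continuous g := F_cont lam hUc hU1
  have hrep1 := (radial_rep (m := m) (lap_contDiffOn hu4) hlrad hgc (by
    intro r hr
    rw [← he]
    change biharm u (r • e) = _
    rw [hu.eqn _ (hbr r hr), hg]
    simp only
    rw [hUe r ⟨hr.1, hr.2.le⟩, div_eq_mul_inv])).1
  set Z0 := lap u 0 with hZ0
  have hhc : Continuous (fun r => Z0 + rL m g r) := continuous_const.add (rL_cont m hgc)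
  have hrep2 := (radial_rep (m := m) (hu4.of_le (by norm_num)) hrad hhc hrep1).1
  rw [← he] at hrep1 hrep2
  have hUrep : ∀ r ∈ Icc (0:ℝ) 1, U r = u 0 + rL m (fun r => Z0 + rL m g r) r := by
    have h1 : EqOn U (fun r => u 0 + rL m (fun r => Z0 + rL m g r) r) (Ico 0 1) := by
      intro r hr
      rw [hUe r ⟨hr.1, hr.2.le⟩]; exact hrep2 r hr
    have h2 := h1.closure hUc (continuous_const.add (rL_cont m hhc))
    rwa [closure_Ico zero_ne_one] at h2
  have hβ1 : rD m (fun r => Z0 + rL m g r) 1 = β := by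
    have h1 : HasDerivWithinAt (fun r : ℝ => u (r • e)) β (Icc 0 1) 1 := by
      have h2 : HasFDerivWithinAt u (fderivWithin ℝ u (closedBall 0 1) e) (closedBall 0 1) ((1:ℝ) • e) := by
        rw [one_smul]
        exact ((hu.contDiffOn.differentiableOn (by norm_num)) _ (by simpa using hen.le)).hasFDerivWithinAt
      have h3 : HasDerivWithinAt (fun r : ℝ => r • e) e (Icc 0 1) 1 := by
        simpa using ((hasDerivAt_id (1:ℝ)).smul_const e).hasDerivWithinAt
      have h4 := h2.comp_hasDerivWithinAt (1:ℝ) h3 (fun r hr => hcbr r hr)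
      rw [hu.bdry_deriv e hen] at h4
      exact h4
    have h5 : HasDerivWithinAt (fun r : ℝ => u (r • e)) (rD m (fun r => Z0 + rL m g r) 1) (Icc 0 1) 1 := by
      refine (((rL_deriv m hhc 1).const_add (u 0)).hasDerivWithinAt).congr ?_ ?_
      · intro r hr; rw [← hUe r hr, hUrep r hr]
      · rw [← hUe 1 (by simp), hUrep 1 (by simp)]
    exact (uniqueDiffOn_Icc zero_lt_one 1 (by simp)).eq_deriv _ h5 h1
  have hZ0' : Z0 = β * (m + 1) - (m + 1) * rA m (rL m g) 1 := by
    rw [rD, one_mul] at hβ1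
    have h1 := rA_add m (g := fun _ => Z0) continuous_const (rL_cont m hgc) 1
    rw [hβ1, rA_const] at h1
    have : (m:ℝ) + 1 ≠ 0 := by positivity
    rw [h1]; field_simp; ring
  have hfun : (fun r => Z0 + rL m g r) = hZ m β g := by
    ext r; rw [hZ_eq, hZ0']
  constructor
  · intro r hr
    have h1 := hUrep 1 (by simp)
    have h2 := hUrep r hr
    rw [hfun] at h1 h2
    have h3 := ph_eq (m := m) α β hgc 1
    have h4 := ph_eq (m := m) α β hgc r
    rw [rG_one] at h3
    have h5 : U 1 = α := by rw [hUe 1 (by simp)]; exact hu.bdry _ (by rw [one_smul, hen])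
    have h6 : ph α β 1 = α := by unfold ph; ring
    linarith
  · intro x hx
    have hx' : ‖x‖ ∈ Ico (0:ℝ) 1 := ⟨norm_nonneg _, mem_ball_zero_iff.1 hx⟩
    rw [hlrad x hx (‖x‖ • e) (hnr _ ⟨hx'.1, hx'.2.le⟩).symm, hrep1 _ hx', ← hfun]

end

noncomputable def cN (m : ℕ) : ℝ :=
  (m + 1) * (volume : Measure (EuclideanSpace ℝ (Fin (m + 1)))).real (ball 0 1)

lemma cN_nonneg (m : ℕ) : 0 ≤ cN m := by unfold cN; positivity

lemma integral_ball {m : ℕ} (F : EuclideanSpace ℝ (Fin (m + 1)) → ℝ) (f : ℝ → ℝ)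
    (hF : ∀ x ∈ ball (0 : EuclideanSpace ℝ (Fin (m + 1))) 1, F x = f ‖x‖) :
    ∫ x in ball (0 : EuclideanSpace ℝ (Fin (m + 1))) 1, F x = cN m * ∫ r in (0:ℝ)..1, r ^ m * f r := by
  rw [setIntegral_congr_fun measurableSet_ball hF, ← integral_indicator measurableSet_ball]
  have h1 : (ball (0 : EuclideanSpace ℝ (Fin (m + 1))) 1).indicator (fun x => f ‖x‖)
      = fun x => (Iio (1:ℝ)).indicator f ‖x‖ := by
    ext x
    by_cases hx : ‖x‖ < 1
    · rw [indicator_of_mem (by simpa using hx), indicator_of_mem (by simpa using hx)]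
    · rw [indicator_of_notMem (by simpa using hx), indicator_of_notMem (by simpa using hx)]
  rw [h1, integral_fun_norm_addHaar, cN]
  simp only [finrank_euclideanSpace, Fintype.card_fin, Nat.add_sub_cancel, smul_eq_mul, nsmul_eq_mul]
  push_cast
  rw [mul_assoc]
  congr 2
  rw [intervalIntegral.integral_of_le zero_le_one, integral_Ioc_eq_integral_Ioo]
  have h2 : (fun y : ℝ => y ^ m * (Iio (1:ℝ)).indicator f y) = (Iio (1:ℝ)).indicator (fun y => y ^ m * f y) := by
    ext y
    by_cases hy : y < 1
    · rw [indicator_of_mem (by simpa using hy), indicator_of_mem (by simpa using hy)]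
    · rw [indicator_of_notMem (by simpa using hy), indicator_of_notMem (by simpa using hy), mul_zero]
  rw [h2, setIntegral_indicator measurableSet_Iio, Ioi_inter_Iio]

lemma conv_ineq {d D : ℝ} (hD : 0 < D) (h : D ≤ d) :
    2 * (d - D) / d ^ 3 ≤ (D ^ 2)⁻¹ - (d ^ 2)⁻¹ := by
  have hd : 0 < d := hD.trans_le h
  have : (D ^ 2)⁻¹ - (d ^ 2)⁻¹ - 2 * (d - D) / d ^ 3 = (d - D) ^ 2 * (d + 2 * D) / (d ^ 3 * D ^ 2) := by
    field_simp; ring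
  have h2 : 0 ≤ (d - D) ^ 2 * (d + 2 * D) / (d ^ 3 * D ^ 2) := by positivity
  linarith

lemma ptwise {d e e0 e1 : ℝ} (hd : 0 < d) (hde : d ≤ e) (h0 : 0 < e0) (he0 : e0 ≤ e) (he1 : e ≤ e1) :
    (d ^ 3)⁻¹ ≤ (5 * e1 / e0 ^ 2) ^ 3 +
      (e0 ^ 2)⁻¹ * (2 * ((e - d) ^ 2 / d ^ 3) - (e - d) / d ^ 2) := by
  have h1 : 0 < e1 := by linarith
  have key : e0 ^ 2 ≤ e0 ^ 2 * (5 * e1 / e0 ^ 2 * d) ^ 3 + (2 * e - 3 * d) * (e - d) := by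
    set y := 5 * e1 / e0 ^ 2 * d with hy
    have hy0 : 0 < y := by positivity
    have hyd : y * e0 ^ 2 = 5 * e1 * d := by rw [hy]; field_simp
    by_cases h2 : y < 1
    · have h3 : 5 * e * d ≤ e0 ^ 2 := by
        have : 5 * e * d ≤ 5 * e1 * d := by gcongr
        nlinarith [sq_nonneg e0]
      have : 0 ≤ e0 ^ 2 * y ^ 3 := by positivity
      nlinarith
    · push Not at h2
      by_cases h3 : 3 * d ≤ 2 * e
      · have h4 : 1 ≤ y ^ 3 := one_le_pow₀ h2
        have h5 : 0 ≤ (2 * e - 3 * d) * (e - d) := mul_nonneg (by linarith) (by linarith)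
        nlinarith [sq_nonneg e0]
      · push Not at h3
        have h4 : 3 * e1 ≤ y * e0 := by
          have : 3 * e1 * e0 ≤ y * e0 * e0 := by nlinarith
          exact le_of_mul_le_mul_right this h0
        have h5 : (3 * e1) ^ 2 ≤ (y * e0) ^ 2 := pow_le_pow_left₀ (by positivity) h4 2
        have h6 : (y * e0) ^ 2 ≤ e0 ^ 2 * y ^ 3 := by
          have : e0 ^ 2 * y ^ 3 = (y * e0) ^ 2 * y := by ring
          rw [this]; nlinarith [sq_nonneg (y * e0)]
        nlinarith [sq_nonneg (6 * d - 5 * e)]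
  have h2 : (5 * e1 / e0 ^ 2) ^ 3 +
      (e0 ^ 2)⁻¹ * (2 * ((e - d) ^ 2 / d ^ 3) - (e - d) / d ^ 2) - (d ^ 3)⁻¹ =
      (e0 ^ 2 * (5 * e1 / e0 ^ 2 * d) ^ 3 + (2 * e - 3 * d) * (e - d) - e0 ^ 2) / (e0 ^ 2 * d ^ 3) := by
    field_simp; ring
  have h3 : 0 ≤ (e0 ^ 2 * (5 * e1 / e0 ^ 2 * d) ^ 3 + (2 * e - 3 * d) * (e - d) - e0 ^ 2) / (e0 ^ 2 * d ^ 3) :=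
    div_nonneg (by linarith) (by positivity)
  linarith

section
variable {m : ℕ} {α β lam mu : ℝ} {U V : ℝ → ℝ}

lemma int_mono {m : ℕ} {f g : ℝ → ℝ} (hf : Continuous f) (hg : Continuous g) (h : ∀ r ∈ Icc (0:ℝ) 1, f r ≤ g r) :
    ∫ r in (0:ℝ)..1, r ^ m * f r ≤ ∫ r in (0:ℝ)..1, r ^ m * g r := by
  apply intervalIntegral.integral_mono_on zero_le_one
    (Continuous.intervalIntegrable (by fun_prop) _ _) (Continuous.intervalIntegrable (by fun_prop) _ _)
  intro r hr
  exact mul_le_mul_of_nonneg_left (h r hr) (pow_nonneg hr.1 m)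

lemma ph_cont : Continuous (ph α β) := by unfold ph; fun_prop

lemma stab_profile (hlam : 0 < lam) (hmu : lam < mu) (hU : Continuous U) (hU1 : ∀ r, U r < 1)
    (hV : Continuous V) (hV1 : ∀ r, V r < 1) (hUV : ∀ r ∈ Icc (0:ℝ) 1, U r ≤ V r)
    (hUf : ∀ r ∈ Icc (0:ℝ) 1, U r = ph α β r + rG m (fun s => lam * ((1 - U s) ^ 2)⁻¹) r)
    (hVf : ∀ r ∈ Icc (0:ℝ) 1, V r = ph α β r + rG m (fun s => mu * ((1 - V s) ^ 2)⁻¹) r) :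
    2 * ∫ r in (0:ℝ)..1, r ^ m * ((U r - ph α β r) ^ 2 / (1 - U r) ^ 3) ≤
      ∫ r in (0:ℝ)..1, r ^ m * ((U r - ph α β r) / (1 - U r) ^ 2) := by
  have hd : ∀ r, 0 < 1 - U r := fun r => by linarith [hU1 r]
  have hD : ∀ r, 0 < 1 - V r := fun r => by linarith [hV1 r]
  have hgU := F_cont lam hU hU1
  have hgV := F_cont mu hV hV1
  have hac : Continuous (fun r => 2 * lam / (1 - U r) ^ 3) :=
    Continuous.div (by fun_prop) (by fun_prop) (fun r => (pow_pos (hd r) 3).ne')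
  have h := stab m (a := fun r => 2 * lam / (1 - U r) ^ 3) (g := fun s => lam * ((1 - U s) ^ 2)⁻¹)
    (w := fun r => V r - U r) (q := fun s => mu * ((1 - V s) ^ 2)⁻¹ - lam * ((1 - U s) ^ 2)⁻¹)
    (M := lam / (mu - lam)) hac hgU (hV.sub hU) (hgV.sub hgU) ?_ ?_ ?_ ?_ ?_ ?_
  · have e1 : ∫ r in (0:ℝ)..1, r ^ m * (2 * lam / (1 - U r) ^ 3 * rG m (fun s => lam * ((1 - U s) ^ 2)⁻¹) r ^ 2)
        = lam * (2 * ∫ r in (0:ℝ)..1, r ^ m * ((U r - ph α β r) ^ 2 / (1 - U r) ^ 3)) := by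
      rw [← mul_assoc, ← intervalIntegral.integral_const_mul]
      apply intervalIntegral.integral_congr
      intro r hr
      rw [uIcc_of_le zero_le_one] at hr
      have h1 : rG m (fun s => lam * ((1 - U s) ^ 2)⁻¹) r = U r - ph α β r := by linarith [hUf r hr]
      simp only [h1]; ring
    have e2 : ∫ r in (0:ℝ)..1, r ^ m * (lam * ((1 - U r) ^ 2)⁻¹ * rG m (fun s => lam * ((1 - U s) ^ 2)⁻¹) r)
        = lam * ∫ r in (0:ℝ)..1, r ^ m * ((U r - ph α β r) / (1 - U r) ^ 2) := by
      rw [← intervalIntegral.integral_const_mul]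
      apply intervalIntegral.integral_congr
      intro r hr
      rw [uIcc_of_le zero_le_one] at hr
      have h1 : rG m (fun s => lam * ((1 - U s) ^ 2)⁻¹) r = U r - ph α β r := by linarith [hUf r hr]
      simp only [h1]; ring
    rw [e1, e2] at h
    exact le_of_mul_le_mul_left h hlam
  · intro r _
    have := hd r
    positivity
  · intro r _
    have := hd r
    positivity
  · intro r hr
    rw [rG_sub m hgV hgU]
    linarith [hUf r hr, hVf r hr]
  · intro r hr
    have h1 := conv_ineq (hD r) (by linarith [hUV r hr] : 1 - V r ≤ 1 - U r)
    have h2 : 0 < ((1 - V r) ^ 2)⁻¹ := by have := hD r; positivity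
    have h3 := mul_le_mul_of_nonneg_left h1 hlam.le
    have h4 : 2 * lam / (1 - U r) ^ 3 * (V r - U r) = lam * (2 * (1 - U r - (1 - V r)) / (1 - U r) ^ 3) := by ring
    rw [h4]
    nlinarith
  · exact div_nonneg hlam.le (by linarith)
  · intro r hr
    have h1 := F_mono (hUV r hr) (hV1 r)
    have h2 : 0 < mu - lam := by linarith
    rw [div_mul_eq_mul_div, le_div_iff₀ h2, mul_assoc]
    apply mul_le_mul_of_nonneg_left _ hlam.le
    nlinarith

lemma int_pow_const (m : ℕ) (c : ℝ) : ∫ r in (0:ℝ)..1, r ^ m * c = c / (m + 1) := by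
  rw [intervalIntegral.integral_mul_const, integral_pow]
  simp; ring

lemma est_profile (hadm : Admissible α β) (hlam : 0 < lam) {L : ℝ} (hL : lam ≤ L)
    (hU : Continuous U) (hU1 : ∀ r, U r < 1)
    (hUf : ∀ r ∈ Icc (0:ℝ) 1, U r = ph α β r + rG m (fun s => lam * ((1 - U s) ^ 2)⁻¹) r)
    (hst : 2 * ∫ r in (0:ℝ)..1, r ^ m * ((U r - ph α β r) ^ 2 / (1 - U r) ^ 3) ≤
      ∫ r in (0:ℝ)..1, r ^ m * ((U r - ph α β r) / (1 - U r) ^ 2)) :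
    (∫ r in (0:ℝ)..1, r ^ m * (hZ m β (fun s => lam * ((1 - U s) ^ 2)⁻¹) r) ^ 2) +
      (∫ r in (0:ℝ)..1, r ^ m * ((1 - U r) ^ 3)⁻¹) ≤
    (2 * (β * (m + 1)) ^ 2 / (m + 1) + 2 * (L * (1 - α) *
      (1 / (m + 1) + (5 * (1 - α) / (1 - (α - β / 2)) ^ 2) ^ 3 / (m + 1)))) +
        (5 * (1 - α) / (1 - (α - β / 2)) ^ 2) ^ 3 / (m + 1) := by
  set k3 := (5 * (1 - α) / (1 - (α - β / 2)) ^ 2) ^ 3 with hk3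
  set g : ℝ → ℝ := fun s => lam * ((1 - U s) ^ 2)⁻¹ with hg
  have hd : ∀ r, 0 < 1 - U r := fun r => by linarith [hU1 r]
  have hgc : Continuous g := F_cont lam hU hU1
  have hpc := ph_cont (α := α) (β := β)
  have g0 : ∀ r, 0 ≤ g r := fun r => by have := hd r; simp only [hg]; positivity
  have hψ : ∀ r ∈ Icc (0:ℝ) 1, 0 ≤ U r - ph α β r := fun r hr => by
    have := rG_nonneg m hgc (fun r _ => g0 r) r hr
    linarith [hUf r hr]
  have c1 : Continuous fun r => (U r - ph α β r) ^ 2 / (1 - U r) ^ 3 :=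
    Continuous.div (by fun_prop) (by fun_prop) (fun r => (pow_pos (hd r) 3).ne')
  have c2 : Continuous fun r => (U r - ph α β r) / (1 - U r) ^ 2 :=
    Continuous.div (by fun_prop) (by fun_prop) (fun r => (pow_pos (hd r) 2).ne')
  have c3 : Continuous fun r => ((1 - U r) ^ 3)⁻¹ :=
    Continuous.inv₀ (by fun_prop) (fun r => (pow_pos (hd r) 3).ne')
  set e0 := 1 - (α - β / 2) with he0
  have he0p : 0 < e0 := by have := hadm.2; linarith
  have hphl : ∀ r ∈ Icc (0:ℝ) 1, α ≤ ph α β r ∧ ph α β r ≤ α - β / 2 := by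
    intro r hr
    have h1 : 0 ≤ 1 - r ^ 2 := by nlinarith [hr.1, hr.2]
    have h2 := hadm.1
    unfold ph
    constructor
    · nlinarith [mul_nonneg (neg_nonneg.2 h2) h1]
    · nlinarith [mul_nonneg (neg_nonneg.2 h2) (sq_nonneg r)]
  -- cubic integral
  have hcub : ∫ r in (0:ℝ)..1, r ^ m * ((1 - U r) ^ 3)⁻¹ ≤ k3 / (m + 1) := by
    have h1 := int_mono (m := m) (f := fun r => ((1 - U r) ^ 3)⁻¹)
      (g := fun r => k3 + (e0 ^ 2)⁻¹ * (2 * ((U r - ph α β r) ^ 2 / (1 - U r) ^ 3) - (U r - ph α β r) / (1 - U r) ^ 2))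
      c3 (by fun_prop) (by
        intro r hr
        have h2 := ptwise (d := 1 - U r) (e := 1 - ph α β r) (e0 := e0) (e1 := 1 - α) (hd r)
          (by linarith [hψ r hr]) he0p (by linarith [(hphl r hr).2]) (by linarith [(hphl r hr).1])
        have h3 : 1 - ph α β r - (1 - U r) = U r - ph α β r := by ring
        rw [h3] at h2
        exact h2)
    refine h1.trans ?_
    have h4 : ∫ r in (0:ℝ)..1, r ^ m * (k3 + (e0 ^ 2)⁻¹ * (2 * ((U r - ph α β r) ^ 2 / (1 - U r) ^ 3) - (U r - ph α β r) / (1 - U r) ^ 2))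
        = k3 / (m + 1) + (e0 ^ 2)⁻¹ * (2 * (∫ r in (0:ℝ)..1, r ^ m * ((U r - ph α β r) ^ 2 / (1 - U r) ^ 3)) -
          ∫ r in (0:ℝ)..1, r ^ m * ((U r - ph α β r) / (1 - U r) ^ 2)) := by
      rw [← int_pow_const, ← intervalIntegral.integral_const_mul, ← intervalIntegral.integral_sub,
        ← intervalIntegral.integral_const_mul, ← intervalIntegral.integral_add]
      · apply intervalIntegral.integral_congr
        intro r _
        simp only; ring
      all_goals exact Continuous.intervalIntegrable (by fun_prop) _ _
    rw [h4]
    have h5 : 0 < (e0 ^ 2)⁻¹ := by positivity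
    nlinarith
  have hquad : ∫ r in (0:ℝ)..1, r ^ m * (rZ m g r * rZ m g r) ≤ L * (1 - α) * (1 / (m + 1) + k3 / (m + 1)) := by
    rw [← rG_symm m hgc hgc]
    have h1α : 0 < 1 - α := by have := hadm.1; linarith
    have h1 := int_mono (m := m) (f := fun r => g r * rG m g r)
      (g := fun r => L * (1 - α) * (1 + ((1 - U r) ^ 3)⁻¹)) (hgc.mul (rG_cont m hgc)) (by fun_prop) (by
        intro r hr
        have h2 : rG m g r = U r - ph α β r := by linarith [hUf r hr]
        change lam * ((1 - U r) ^ 2)⁻¹ * rG m g r ≤ L * (1 - α) * (1 + ((1 - U r) ^ 3)⁻¹)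
        rw [h2]
        have h3 : U r - ph α β r ≤ 1 - α := by linarith [(hphl r hr).1, hU1 r]
        have h4 : ((1 - U r) ^ 2)⁻¹ ≤ 1 + ((1 - U r) ^ 3)⁻¹ := by
          rw [← inv_pow, ← inv_pow]
          have : 0 < (1 - U r)⁻¹ := inv_pos.2 (hd r)
          set x := (1 - U r)⁻¹
          by_cases hx : x ≤ 1
          · nlinarith [pow_pos this 3]
          · push Not at hx
            nlinarith [pow_pos this 2]
        have h5 : 0 < ((1 - U r) ^ 2)⁻¹ := by have := hd r; positivity
        calc lam * ((1 - U r) ^ 2)⁻¹ * (U r - ph α β r)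
            ≤ L * ((1 - U r) ^ 2)⁻¹ * (1 - α) := by
              apply mul_le_mul _ h3 (hψ r hr) (mul_nonneg (by linarith) h5.le)
              exact mul_le_mul_of_nonneg_right hL h5.le
          _ = L * (1 - α) * ((1 - U r) ^ 2)⁻¹ := by ring
          _ ≤ _ := mul_le_mul_of_nonneg_left h4 (mul_nonneg (by linarith) h1α.le))
    refine h1.trans ?_
    have h4 : ∫ r in (0:ℝ)..1, r ^ m * (L * (1 - α) * (1 + ((1 - U r) ^ 3)⁻¹))
        = L * (1 - α) * (1 / (m + 1) + ∫ r in (0:ℝ)..1, r ^ m * ((1 - U r) ^ 3)⁻¹) := by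
      rw [← int_pow_const, ← intervalIntegral.integral_add, ← intervalIntegral.integral_const_mul]
      · apply intervalIntegral.integral_congr
        intro r _
        simp only; ring
      all_goals exact Continuous.intervalIntegrable (by fun_prop) _ _
    rw [h4]
    apply mul_le_mul_of_nonneg_left _ (mul_nonneg (by linarith) h1α.le)
    linarith
  have hzc := rZ_cont m hgc
  have hlap : ∫ r in (0:ℝ)..1, r ^ m * (hZ m β g r) ^ 2 ≤
      2 * (β * (m + 1)) ^ 2 / (m + 1) + 2 * ∫ r in (0:ℝ)..1, r ^ m * (rZ m g r * rZ m g r) := by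
    have hhc := hZ_cont (m := m) β hgc
    have h1 := int_mono (m := m) (f := fun r => (hZ m β g r) ^ 2)
      (g := fun r => 2 * (β * (m + 1)) ^ 2 + 2 * (rZ m g r * rZ m g r)) (by fun_prop) (by fun_prop) (by
        intro r _
        simp only [hZ]
        nlinarith [sq_nonneg (β * (m + 1) - rZ m g r)])
    refine h1.trans (le_of_eq ?_)
    rw [← int_pow_const, ← intervalIntegral.integral_const_mul, ← intervalIntegral.integral_add]
    · apply intervalIntegral.integral_congr
      intro r _
      simp only; ring
    all_goals exact Continuous.intervalIntegrable (by fun_prop) _ _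
  linarith

end

lemma compare {m : ℕ} {α β : ℝ} (hadm : Admissible α β)
    {uMin : ℝ → EuclideanSpace ℝ (Fin (m + 1)) → ℝ}
    (hMin : ∀ lam : ℝ, 0 < lam → lam < sSup (solSetAB (m + 1) α β) →
      IsClassicalSolutionAB (m + 1) lam α β (uMin lam) ∧
        ∀ v, IsClassicalSolutionAB (m + 1) lam α β v →
          ∀ x ∈ ball (0 : EuclideanSpace ℝ (Fin (m + 1))) 1, uMin lam x ≤ v x)
    {lam : ℝ} (hlam : 0 < lam) (hlt : lam < sSup (solSetAB (m + 1) α β)) :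
    ∃ U : ℝ → ℝ, Continuous U ∧ (∀ r, U r < 1) ∧
      (∀ x ∈ ball (0 : EuclideanSpace ℝ (Fin (m + 1))) 1, uMin lam x = U ‖x‖) ∧
      (∀ r ∈ Icc (0:ℝ) 1, U r = ph α β r + rG m (fun s => lam * ((1 - U s) ^ 2)⁻¹) r) ∧
      (∀ x ∈ ball (0 : EuclideanSpace ℝ (Fin (m + 1))) 1,
        lap (uMin lam) x = hZ m β (fun s => lam * ((1 - U s) ^ 2)⁻¹) ‖x‖) ∧
      2 * ∫ r in (0:ℝ)..1, r ^ m * ((U r - ph α β r) ^ 2 / (1 - U r) ^ 3) ≤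
      ∫ r in (0:ℝ)..1, r ^ m * ((U r - ph α β r) / (1 - U r) ^ 2) := by
  obtain ⟨U, hU, hU1, hUx, hUf, hUl⟩ := profile hadm (hMin lam hlam hlt).1 (hMin lam hlam hlt).2
  refine ⟨U, hU, hU1, hUx, hUf, hUl, ?_⟩
  set mu := (lam + sSup (solSetAB (m + 1) α β)) / 2 with hmudef
  have hmu : lam < mu := by rw [hmudef]; linarith
  have hmu2 : mu < sSup (solSetAB (m + 1) α β) := by rw [hmudef]; linarith
  have hmu0 : 0 < mu := hlam.trans hmu
  obtain ⟨V, hV, hV1, hVx, hVf, -⟩ := profile hadm (hMin mu hmu0 hmu2).1 (hMin mu hmu0 hmu2).2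
  have hlip : ∀ r ∈ Icc (0:ℝ) 1, ∀ s ∈ Icc (0:ℝ) 1, |ph α β r - ph α β s| ≤ |β| * |r - s| := by
    intro r hr s hs
    have h1 : ph α β r - ph α β s = β * ((r + s) / 2) * (r - s) := by unfold ph; ring
    rw [h1, abs_mul, abs_mul]
    have h2 : |(r + s) / 2| ≤ 1 := by
      rw [abs_le]; constructor <;> linarith [hr.1, hr.2, hs.1, hs.2]
    have h3 : |β| * |(r + s) / 2| ≤ |β| := by nlinarith [abs_nonneg β]
    exact mul_le_mul_of_nonneg_right h3 (abs_nonneg _)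
  obtain ⟨v, hv, hv1, hvV, hvf⟩ := exists_fix m hlip hlam hmu.le hV hV1 hVf
  obtain ⟨u', hu', hu'v⟩ := exists_sol hlam hadm.1 hv hv1 hvf
  refine stab_profile hlam hmu hU hU1 hV hV1 ?_ hUf hVf
  intro r hr
  rcases hr.2.eq_or_lt with h | h
  · rw [hUf r hr, hVf r hr, h, rG_one, rG_one]
  · have hb := mem_ball_e (m := m) (by rw [abs_of_nonneg hr.1]; exact h) 0
    have hn : ‖r • (EuclideanSpace.single 0 1 : EuclideanSpace ℝ (Fin (m + 1)))‖ = r := by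
      rw [norm_smul]; simp [abs_of_nonneg hr.1]
    have h1 := (hMin lam hlam hlt).2 u' hu' _ hb
    rw [hUx _ hb, hu'v _ (by rw [hn]; exact hr.2), hn] at h1
    exact h1.trans (hvV r hr)

lemma solSet_zero (α β : ℝ) : solSetAB 0 α β = ∅ := by
  ext lam
  simp only [solSetAB, mem_setOf_eq, mem_empty_iff_false, iff_false]
  rintro ⟨hlam, u, hu⟩
  have h1 := hu.eqn 0 (by simp)
  have h2 := hu.lt_one 0 (by simp)
  have h3 : biharm u 0 = 0 := by simp [biharm, lap]
  rw [h3] at h1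
  have h4 : 0 < 1 - u 0 := by linarith
  have : 0 < lam / (1 - u 0) ^ 2 := by positivity
  linarith

/-- a-priori estimates along the minimal branch of `(P)_{λ,α,β}`. -/
theorem minimal_branch_estimates (N : ℕ) (α β : ℝ) (hadm : Admissible α β)
    (uMin : ℝ → EuclideanSpace ℝ (Fin N) → ℝ)
    (hMin : ∀ lam : ℝ, 0 < lam → lam < sSup (solSetAB N α β) →
      IsClassicalSolutionAB N lam α β (uMin lam) ∧
        ∀ v, IsClassicalSolutionAB N lam α β v →
          ∀ x ∈ ball (0 : EuclideanSpace ℝ (Fin N)) 1, uMin lam x ≤ v x) :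
    (∀ lam : ℝ, 0 < lam → lam < sSup (solSetAB N α β) →
      2 * ∫ x in ball (0 : EuclideanSpace ℝ (Fin N)) 1,
          (uMin lam x - Phi α β x) ^ 2 / (1 - uMin lam x) ^ 3 ≤
        ∫ x in ball (0 : EuclideanSpace ℝ (Fin N)) 1,
          (uMin lam x - Phi α β x) / (1 - uMin lam x) ^ 2) ∧
      ∃ C : ℝ, 0 < C ∧ ∀ lam : ℝ, 0 < lam → lam < sSup (solSetAB N α β) →
        (∫ x in ball (0 : EuclideanSpace ℝ (Fin N)) 1, (lap (uMin lam) x) ^ 2) +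
            (∫ x in ball (0 : EuclideanSpace ℝ (Fin N)) 1, ((1 - uMin lam x) ^ 3)⁻¹) ≤ C := by
  rcases N with _ | m
  · rw [solSet_zero, Real.sSup_empty]
    exact ⟨fun lam h1 h2 => absurd h1 (not_lt.2 h2.le),
      1, one_pos, fun lam h1 h2 => absurd h1 (not_lt.2 h2.le)⟩
  have hPhi : ∀ x : EuclideanSpace ℝ (Fin (m + 1)), Phi α β x = ph α β ‖x‖ := fun x => rfl
  constructor
  · intro lam hlam hlt
    obtain ⟨U, hU, hU1, hUx, hUf, hUl, hst⟩ := compare hadm hMin hlam hlt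
    rw [integral_ball _ (fun r => (U r - ph α β r) ^ 2 / (1 - U r) ^ 3)
        (fun x hx => by simp only [hUx x hx, hPhi]),
      integral_ball _ (fun r => (U r - ph α β r) / (1 - U r) ^ 2)
        (fun x hx => by simp only [hUx x hx, hPhi])]
    have := mul_le_mul_of_nonneg_left hst (cN_nonneg m)
    linarith
  · set K := (2 * (β * (m + 1)) ^ 2 / (m + 1) + 2 * (sSup (solSetAB (m + 1) α β) * (1 - α) *
      (1 / (m + 1) + (5 * (1 - α) / (1 - (α - β / 2)) ^ 2) ^ 3 / (m + 1)))) +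
        (5 * (1 - α) / (1 - (α - β / 2)) ^ 2) ^ 3 / (m + 1) with hK
    refine ⟨|cN m * K| + 1, by positivity, ?_⟩
    intro lam hlam hlt
    obtain ⟨U, hU, hU1, hUx, hUf, hUl, hst⟩ := compare hadm hMin hlam hlt
    have h1 := est_profile hadm hlam hlt.le hU hU1 hUf hst
    rw [integral_ball _ (fun r => (hZ m β (fun s => lam * ((1 - U s) ^ 2)⁻¹) r) ^ 2)
        (fun x hx => by simp only [hUl x hx]),
      integral_ball _ (fun r => ((1 - U r) ^ 3)⁻¹)
        (fun x hx => by simp only [hUx x hx]), ← mul_add]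
    have h2 := mul_le_mul_of_nonneg_left h1 (cN_nonneg m)
    exact h2.trans ((le_abs_self _).trans (by linarith))
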